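/- arXiv:1407.0286 — 17 statements merged into one kernel-verified Lean document; each statement's English description precedes it below -/
import Mathlib

section
/- Let r : ℝ → ℝ be even and increasing on [0,+∞). Define F_r(x,y) = f(x,y) + λ Σ_{i=1}^n r(x_i) for (x,y) ∈ K, and define F̄_r(x,y,z) = f(x,y) + λ Σ_{i=1}^n r(z_i) on Ω₁ = {(x,y,z) ∈ ℝⁿ×ℝᵐ×ℝⁿ : (x,y) ∈ K, |x_i| ≤ z_i for all i = 1,…,n}. Then a point (x*,y*) ∈ K is a global minimizer of F_r on K if and only if (x*,y*,|x*|) is a global minimizer of F̄_r on Ω₁, where |x*| is the componentwise absolute value of x*. Moreover, if (x*,y*,z*) is a global minimizer of F̄_r on Ω₁, then (x*,y*) is a global minimizer of F_r on K. -/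
/-- equivalence between global minimizers of the approximate problem
`min F_r` over `K` and of `min F̄_r` over `Ω₁`. -/
theorem stmt_0 {n m : ℕ}
    (K : Set ((Fin n → ℝ) × (Fin m → ℝ))) (hK : Convex ℝ K)
    (g h : (Fin n → ℝ) × (Fin m → ℝ) → ℝ)
    (hg : ConvexOn ℝ Set.univ g) (hh : ConvexOn ℝ Set.univ h)
    (f : (Fin n → ℝ) × (Fin m → ℝ) → ℝ) (hf : ∀ p, f p = g p - h p)
    (lam : ℝ) (hlam : 0 < lam)
    (r : ℝ → ℝ) (hrEven : ∀ t, r (-t) = r t)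
    (hrMono : MonotoneOn r (Set.Ici 0))
    (Fr : (Fin n → ℝ) × (Fin m → ℝ) → ℝ)
    (hFr : ∀ p, Fr p = f p + lam * ∑ i, r (p.1 i))
    (Fbar : ((Fin n → ℝ) × (Fin m → ℝ)) × (Fin n → ℝ) → ℝ)
    (hFbar : ∀ pz, Fbar pz = f pz.1 + lam * ∑ i, r (pz.2 i))
    (Ω₁ : Set (((Fin n → ℝ) × (Fin m → ℝ)) × (Fin n → ℝ)))
    (hΩ : Ω₁ = {pz | pz.1 ∈ K ∧ ∀ i, |pz.1.1 i| ≤ pz.2 i}) :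
    (∀ p ∈ K,
      ((∀ q ∈ K, Fr p ≤ Fr q) ↔
        ((p, fun i => |p.1 i|) ∈ Ω₁ ∧
          ∀ qz ∈ Ω₁, Fbar (p, fun i => |p.1 i|) ≤ Fbar qz)))
    ∧ (∀ pz ∈ Ω₁, (∀ qz ∈ Ω₁, Fbar pz ≤ Fbar qz) →
        pz.1 ∈ K ∧ ∀ q ∈ K, Fr pz.1 ≤ Fr q) := by
  have hrabs : ∀ t, r |t| = r t := by
    intro t
    rcases abs_choice t with h1 | h1 <;> rw [h1]
    exact hrEven t
  have h_eq : ∀ p, Fbar (p, fun i => |p.1 i|) = Fr p := by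
    intro p
    rw [hFbar, hFr]
    simp only [hrabs]
  have h_mem : ∀ p ∈ K, (p, fun i => |p.1 i|) ∈ Ω₁ := by
    intro p hp
    rw [hΩ]
    exact ⟨hp, fun i => le_refl _⟩
  have h_K : ∀ pz ∈ Ω₁, pz.1 ∈ K := by
    intro pz hpz
    rw [hΩ] at hpz
    exact hpz.1
  have h_le : ∀ pz ∈ Ω₁, Fr pz.1 ≤ Fbar pz := by
    intro pz hpz
    rw [hΩ] at hpz
    rw [hFr, hFbar]
    have h1 : ∑ i, r (pz.1.1 i) ≤ ∑ i, r (pz.2 i) := by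
      apply Finset.sum_le_sum
      intro i _
      rw [← hrabs (pz.1.1 i)]
      exact hrMono (Set.mem_Ici.2 (abs_nonneg _)) (Set.mem_Ici.2 ((abs_nonneg _).trans (hpz.2 i))) (hpz.2 i)
    have h2 := mul_le_mul_of_nonneg_left h1 hlam.le
    linarith
  refine ⟨fun p hp => ⟨fun hmin => ⟨h_mem p hp, fun qz hqz => ?_⟩, fun hmin q hq => ?_⟩,
    fun pz hpz hmin => ⟨h_K pz hpz, fun q hq => ?_⟩⟩
  · rw [h_eq]
    exact (hmin _ (h_K qz hqz)).trans (h_le qz hqz)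
  · rw [← h_eq p, ← h_eq q]
    exact hmin.2 _ (h_mem q hq)
  · rw [← h_eq q]
    exact (h_le pz hpz).trans (hmin _ (h_mem q hq))
end

section
/- Let r : ℝ → ℝ be even and increasing on [0,+∞). Define F_r(x,y) = f(x,y) + λ Σ_{i=1}^n r(x_i) for (x,y) ∈ K, and define F̄_r(x,y,z) = f(x,y) + λ Σ_{i=1}^n r(z_i) on Ω₁ = {(x,y,z) ∈ ℝⁿ×ℝᵐ×ℝⁿ : (x,y) ∈ K, |x_i| ≤ z_i for all i = 1,…,n}. Then a point (x*,y*) ∈ K is a local minimizer of F_r on K if and only if (x*,y*,|x*|) is a local minimizer of F̄_r on Ω₁, where |x*| is the componentwise absolute value of x*. -/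
/-- equivalence between local minimizers of the approximate problem
`min F_r` over `K` and of `min F̄_r` over `Ω₁` (at the point `(x*, y*, |x*|)`). -/
theorem stmt_1 {n m : ℕ}
    (K : Set ((Fin n → ℝ) × (Fin m → ℝ))) (hK : Convex ℝ K)
    (g h : (Fin n → ℝ) × (Fin m → ℝ) → ℝ)
    (hg : ConvexOn ℝ Set.univ g) (hh : ConvexOn ℝ Set.univ h)
    (f : (Fin n → ℝ) × (Fin m → ℝ) → ℝ) (hf : ∀ p, f p = g p - h p)
    (lam : ℝ) (hlam : 0 < lam)
    (r : ℝ → ℝ) (hrEven : ∀ t, r (-t) = r t)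
    (hrMono : MonotoneOn r (Set.Ici 0))
    (Fr : (Fin n → ℝ) × (Fin m → ℝ) → ℝ)
    (hFr : ∀ p, Fr p = f p + lam * ∑ i, r (p.1 i))
    (Fbar : ((Fin n → ℝ) × (Fin m → ℝ)) × (Fin n → ℝ) → ℝ)
    (hFbar : ∀ pz, Fbar pz = f pz.1 + lam * ∑ i, r (pz.2 i))
    (Ω₁ : Set (((Fin n → ℝ) × (Fin m → ℝ)) × (Fin n → ℝ)))
    (hΩ : Ω₁ = {pz | pz.1 ∈ K ∧ ∀ i, |pz.1.1 i| ≤ pz.2 i}) :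
    ∀ p ∈ K,
      ((∃ δ > 0, ∀ q ∈ K, ‖q - p‖ < δ → Fr p ≤ Fr q) ↔
        ((p, fun i => |p.1 i|) ∈ Ω₁ ∧
          ∃ δ > 0, ∀ qz ∈ Ω₁, ‖qz - (p, fun i => |p.1 i|)‖ < δ →
            Fbar (p, fun i => |p.1 i|) ≤ Fbar qz)) := by
  have habs : ∀ t, r |t| = r t := by
    intro t
    rcases abs_choice t with h1 | h1 <;> rw [h1]
    exact hrEven t
  have key : ∀ q : (Fin n → ℝ) × (Fin m → ℝ), Fbar (q, fun i => |q.1 i|) = Fr q := by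
    intro q
    rw [hFbar, hFr]
    simp only [habs]
  subst hΩ
  intro p hp
  refine ⟨?_, ?_⟩
  · rintro ⟨δ, hδ, H⟩
    refine ⟨⟨hp, fun i => le_rfl⟩, δ, hδ, ?_⟩
    rintro ⟨q, z⟩ ⟨hq, hz⟩ hn
    rw [key]
    refine (H q hq (lt_of_le_of_lt ?_ hn)).trans ?_
    · exact norm_fst_le ((q, z) - (p, fun i => |p.1 i|))
    · rw [hFr, hFbar]
      have : ∑ i, r (q.1 i) ≤ ∑ i, r (z i) := by
        refine Finset.sum_le_sum fun i _ => ?_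
        rw [← habs (q.1 i)]
        exact hrMono (Set.mem_Ici.2 (abs_nonneg _)) (Set.mem_Ici.2 ((abs_nonneg _).trans (hz i))) (hz i)
      have := mul_le_mul_of_nonneg_left this hlam.le
      simpa using this
  · rintro ⟨-, δ, hδ, H⟩
    refine ⟨δ, hδ, fun q hq hn => ?_⟩
    rw [← key, ← key]
    refine H _ ⟨hq, fun i => le_rfl⟩ (lt_of_le_of_lt ?_ hn)
    rw [Prod.mk_sub_mk, Prod.norm_mk]
    refine max_le le_rfl ?_
    refine (pi_norm_le_iff_of_nonneg (norm_nonneg _)).2 fun i => ?_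
    have h1 : ‖(q - p).1 i‖ ≤ ‖q - p‖ := (norm_le_pi_norm _ i).trans (norm_fst_le _)
    refine le_trans ?_ h1
    exact abs_abs_sub_abs_le_abs_sub (q.1 i) (p.1 i)
end

section
/- Suppose the family {r_θ}_{θ>0} satisfies Assumption 1 and in addition K is compact. Then for every ε > 0 there exists θ(ε) > 0 such that P_θ ⊆ P + B(0,ε) for all θ ≥ θ(ε), where B(0,ε) denotes the open ball of radius ε centered at the origin of ℝⁿ × ℝᵐ. -/
open Filter Topology

/-- The number of nonzero components of `x`, as a real number. -/
noncomputable def zeroNorm {n : ℕ} (x : Fin n → ℝ) : ℝ :=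
  ((Finset.univ.filter fun i => x i ≠ 0).card : ℝ)

/-- The step function: `s(t) = 1` for `t ≠ 0`, `s(0) = 0`. -/
noncomputable def stepFn (t : ℝ) : ℝ := if t = 0 then 0 else 1

/-- Convex subdifferential of a finite function `φ : ℝ → ℝ` at `t₀`. -/
def subdiffR (φ : ℝ → ℝ) (t₀ : ℝ) : Set ℝ :=
  {v | ∀ t, φ t ≥ φ t₀ + (t - t₀) * v}

/-- The "DC subdifferential" `∂r(t) = {u - v : u ∈ ∂φ(t), v ∈ ∂ψ(t)}`. -/
def rSubdiff (φ ψ : ℝ → ℝ) (t : ℝ) : Set ℝ :=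
  {μ | ∃ u ∈ subdiffR φ t, ∃ v ∈ subdiffR ψ t, μ = u - v}

/-- Assumption 1 on the family of approximations `r θ`, with DC decomposition
`r θ = φ θ - ψ θ`. -/
def Assumption1 (r φ ψ : ℝ → ℝ → ℝ) : Prop :=
  (∀ t, Tendsto (fun θ => r θ t) atTop (nhds (stepFn t))) ∧
  (∀ θ > (0 : ℝ), ∀ t, r θ (-t) = r θ t) ∧
  (∀ θ > (0 : ℝ), MonotoneOn (r θ) (Set.Ici 0)) ∧
  (∀ θ > (0 : ℝ), ConvexOn ℝ Set.univ (φ θ) ∧ ConvexOn ℝ Set.univ (ψ θ) ∧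
    ∀ t, r θ t = φ θ t - ψ θ t) ∧
  (∀ θ > (0 : ℝ), ∀ t : ℝ, ∀ μ ∈ rSubdiff (φ θ) (ψ θ) t, 0 ≤ t * μ) ∧
  (∀ a b : ℝ, a ≤ b → (0 : ℝ) ∉ Set.Icc a b → ∀ ε > (0 : ℝ), ∃ Θ : ℝ, ∀ θ ≥ Θ,
    ∀ t ∈ Set.Icc a b, ∀ z ∈ rSubdiff (φ θ) (ψ θ) t, |z| ≤ ε)

open Pointwise in
/-- if `K` is compact, global minimizers of the approximate problem
eventually lie in an `ε`-neighbourhood of the solution set of the ℓ0-problem. -/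
theorem stmt_3 {n m : ℕ}
    (K : Set ((Fin n → ℝ) × (Fin m → ℝ))) (hK : Convex ℝ K) (hKc : IsCompact K)
    (g h : (Fin n → ℝ) × (Fin m → ℝ) → ℝ)
    (hg : ConvexOn ℝ Set.univ g) (hh : ConvexOn ℝ Set.univ h)
    (f : (Fin n → ℝ) × (Fin m → ℝ) → ℝ) (hf : ∀ p, f p = g p - h p)
    (lam : ℝ) (hlam : 0 < lam)
    (r φ ψ : ℝ → ℝ → ℝ) (hA : Assumption1 r φ ψ)
    (P : Set ((Fin n → ℝ) × (Fin m → ℝ)))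
    (hP : P = {p | p ∈ K ∧ ∀ q ∈ K,
      f p + lam * zeroNorm p.1 ≤ f q + lam * zeroNorm q.1})
    (Pθ : ℝ → Set ((Fin n → ℝ) × (Fin m → ℝ)))
    (hPθ : ∀ θ, Pθ θ = {p | p ∈ K ∧ ∀ q ∈ K,
      f p + lam * ∑ i, r θ (p.1 i) ≤ f q + lam * ∑ i, r θ (q.1 i)}) :
    ∀ ε > (0 : ℝ), ∃ Θ > (0 : ℝ), ∀ θ ≥ Θ, Pθ θ ⊆ P + Metric.ball 0 ε := by
  obtain ⟨h1, h2, h3, -⟩ := hA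
  have hfc : Continuous f := by
    have hg' : Continuous g := continuousOn_univ.1 (hg.continuousOn isOpen_univ)
    have hh' : Continuous h := continuousOn_univ.1 (hh.continuousOn isOpen_univ)
    have : f = fun p => g p - h p := funext hf
    rw [this]
    exact hg'.sub hh'
  have hz : ∀ x : Fin n → ℝ, zeroNorm x = ∑ i, stepFn (x i) := by
    intro x
    simp only [zeroNorm, stepFn, Finset.card_filter]
    push_cast
    refine Finset.sum_congr rfl fun i _ => ?_
    by_cases hx : x i = 0 <;> simp [hx]
  intro ε hε
  by_contra hcon
  push Not at hcon
  have hk : ∀ k : ℕ, ∃ θ : ℝ, (k : ℝ) + 1 ≤ θ ∧ ∃ p, p ∈ Pθ θ ∧ p ∉ P + Metric.ball 0 ε := by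
    intro k
    obtain ⟨θ, hθ, hs⟩ := hcon ((k : ℝ) + 1) (by positivity)
    obtain ⟨p, hp, hp'⟩ := Set.not_subset.1 hs
    exact ⟨θ, hθ, p, hp, hp'⟩
  choose θ hθ p hp hpn using hk
  simp only [hPθ, Set.mem_setOf_eq] at hp
  obtain ⟨a, haK, s, hs, hlim⟩ := hKc.tendsto_subseq (fun k => (hp k).1)
  have hθt : Tendsto (fun k => θ (s k)) atTop atTop := by
    refine tendsto_atTop_mono (fun k => ?_) (tendsto_natCast_atTop_atTop.comp hs.tendsto_atTop)
    have := hθ (s k)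
    simp only [Function.comp]
    linarith
  have hpos : ∀ k, 0 < θ k := fun k => lt_of_lt_of_le (by positivity) (hθ k)
  have haP : a ∈ P := by
    rw [hP]
    refine ⟨haK, fun q hq => ?_⟩
    rw [hz, hz]
    have hR : Tendsto (fun k => f q + lam * ∑ i, r (θ (s k)) (q.1 i)) atTop
        (𝓝 (f q + lam * ∑ i, stepFn (q.1 i))) :=
      ((tendsto_finset_sum _ fun i _ => (h1 (q.1 i)).comp hθt).const_mul lam).const_add _
    have hst : ∀ i, stepFn (|a.1 i| / 2) = stepFn (a.1 i) := by
      intro i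
      by_cases hx : a.1 i = 0 <;> simp [stepFn, hx]
    have hL : Tendsto (fun k => f (p (s k)) + lam * ∑ i, r (θ (s k)) (|a.1 i| / 2)) atTop
        (𝓝 (f a + lam * ∑ i, stepFn (a.1 i))) := by
      refine ((hfc.tendsto a).comp hlim).add (Tendsto.const_mul lam ?_)
      refine tendsto_finset_sum _ fun i _ => ?_
      rw [← hst i]
      exact (h1 _).comp hθt
    refine le_of_tendsto_of_tendsto hL hR ?_
    have hev : ∀ i, ∀ᶠ k in atTop, |a.1 i| / 2 ≤ |(p (s k)).1 i| := by
      intro i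
      by_cases hx : a.1 i = 0
      · simp [hx]
      · have hc : Continuous fun z : (Fin n → ℝ) × (Fin m → ℝ) => |z.1 i| := by fun_prop
        have ht := (hc.tendsto a).comp hlim
        have hlt : |a.1 i| / 2 < |a.1 i| := half_lt_self (abs_pos.2 hx)
        exact (ht.eventually (lt_mem_nhds hlt)).mono fun k hk => le_of_lt hk
    filter_upwards [eventually_all.2 hev] with k hk
    refine le_trans ?_ ((hp (s k)).2 q hq)
    gcongr with i _
    have habs : r (θ (s k)) ((p (s k)).1 i) = r (θ (s k)) |(p (s k)).1 i| := by
      rcases abs_choice ((p (s k)).1 i) with h' | h' <;> rw [h']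
      rw [h2 _ (hpos _)]
    rw [habs]
    exact h3 _ (hpos _) (by simp only [Set.mem_Ici]; positivity)
      (by simp only [Set.mem_Ici]; positivity) (hk i)
  obtain ⟨k, hk⟩ := (hlim.eventually (Metric.ball_mem_nhds a hε)).exists
  refine hpn (s k) (Set.mem_add.2 ⟨a, haP, p (s k) - a, ?_, by abel⟩)
  rw [mem_ball_zero_iff, ← dist_eq_norm]
  exact hk
end

section
/- Suppose the family {r_θ}_{θ>0} satisfies Assumption 1 and there is a finite set S ⊆ ℝⁿ × ℝᵐ such that P_θ ∩ S ≠ ∅ for every θ > 0. Then there exists θ₀ ≥ 0 such that P_θ ∩ S ⊆ P for all θ ≥ θ₀. -/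
open Filter Topology

/-- if a finite set `S` meets every solution set `P_θ`, then for `θ`
large enough, `P_θ ∩ S ⊆ P`. -/
theorem stmt_4 {n m : ℕ}
    (K : Set ((Fin n → ℝ) × (Fin m → ℝ))) (hK : Convex ℝ K)
    (g h : (Fin n → ℝ) × (Fin m → ℝ) → ℝ)
    (hg : ConvexOn ℝ Set.univ g) (hh : ConvexOn ℝ Set.univ h)
    (f : (Fin n → ℝ) × (Fin m → ℝ) → ℝ) (hf : ∀ p, f p = g p - h p)
    (lam : ℝ) (hlam : 0 < lam)
    (r φ ψ : ℝ → ℝ → ℝ) (hA : Assumption1 r φ ψ)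
    (P : Set ((Fin n → ℝ) × (Fin m → ℝ)))
    (hP : P = {p | p ∈ K ∧ ∀ q ∈ K,
      f p + lam * zeroNorm p.1 ≤ f q + lam * zeroNorm q.1})
    (Pθ : ℝ → Set ((Fin n → ℝ) × (Fin m → ℝ)))
    (hPθ : ∀ θ, Pθ θ = {p | p ∈ K ∧ ∀ q ∈ K,
      f p + lam * ∑ i, r θ (p.1 i) ≤ f q + lam * ∑ i, r θ (q.1 i)})
    (S : Set ((Fin n → ℝ) × (Fin m → ℝ))) (hS : S.Finite)
    (hne : ∀ θ > (0 : ℝ), (Pθ θ ∩ S).Nonempty) :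
    ∃ θ₀ ≥ (0 : ℝ), ∀ θ ≥ θ₀, Pθ θ ∩ S ⊆ P := by
  have hF : ∀ p : (Fin n → ℝ) × (Fin m → ℝ),
      Tendsto (fun θ => f p + lam * ∑ i, r θ (p.1 i)) atTop
        (nhds (f p + lam * zeroNorm p.1)) := by
    intro p
    have hz : zeroNorm p.1 = ∑ i, stepFn (p.1 i) := by
      simp [zeroNorm, stepFn, Finset.sum_ite]
    rw [hz]
    exact (Tendsto.const_mul lam
      (tendsto_finsetSum _ fun i _ => hA.1 (p.1 i))).const_add (f p)
  have hev : ∀ᶠ θ in atTop, ∀ p ∈ S, p ∈ Pθ θ → p ∈ P := by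
    rw [Filter.eventually_all_finite hS]
    intro p _
    by_cases hp : p ∈ P
    · exact Eventually.of_forall fun _ _ => hp
    by_cases hpK : p ∈ K
    · have : ∃ q ∈ K, f q + lam * zeroNorm q.1 < f p + lam * zeroNorm p.1 := by
        by_contra hcon
        push Not at hcon
        exact hp (by rw [hP]; exact ⟨hpK, hcon⟩)
      obtain ⟨q, hq, hlt⟩ := this
      filter_upwards [(hF q).eventually_lt (hF p) hlt] with θ hθ hmem
      rw [hPθ] at hmem
      exact absurd (hmem.2 q hq) (not_le.mpr hθ)
    · refine Eventually.of_forall fun θ hmem => ?_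
      rw [hPθ] at hmem
      exact absurd hmem.1 hpK
  obtain ⟨a, ha⟩ := eventually_atTop.mp hev
  exact ⟨max a 0, le_max_right _ _, fun θ hθ p hp =>
    ha θ (le_trans (le_max_left _ _) hθ) p hp.2 hp.1⟩
end

section
/- Suppose the family {r_θ}_{θ>0} satisfies Assumption 1 and additionally each r_θ is concave on [0,+∞). Suppose K is a polyhedral convex set having at least one vertex and f is concave and bounded below on K. Then Ω₁ = {(x,y,z) : (x,y) ∈ K, |x_i| ≤ z_i for all i} is a polyhedral convex set having at least one vertex. Let V be the vertex set of Ω₁ and, for θ > 0, let P̄_θ = {(x,y) : there exists z ∈ ℝⁿ such that (x,y,z) ∈ V is a global minimizer of F̄_{r_θ}(x,y,z) = f(x,y) + λ Σ_{i=1}^n r_θ(z_i) on Ω₁}. Then P̄_θ ≠ ∅ for every θ > 0, and there exists θ₀ > 0 such that P̄_θ ⊆ P for all θ ≥ θ₀. -/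
open Filter Topology

/-- A polyhedral convex set: intersection of finitely many closed halfspaces. -/
def IsPolyhedral {E : Type*} [AddCommGroup E] [Module ℝ E] (S : Set E) : Prop :=
  ∃ (N : ℕ) (A : Fin N → E →ₗ[ℝ] ℝ) (c : Fin N → ℝ), S = {p | ∀ j, A j p ≤ c j}

section PolyHelpers

variable {E ι : Type*} [AddCommGroup E] [Module ℝ E] [Fintype ι]

def polySet (A : ι → E →ₗ[ℝ] ℝ) (c : ι → ℝ) : Set E := {p | ∀ j, A j p ≤ c j}

lemma poly_move (A : ι → E →ₗ[ℝ] ℝ) (c : ι → ℝ) {p d : E} (hp : p ∈ polySet A c)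
    (hd : ∀ j, A j p = c j → A j d = 0) :
    ∃ ε > (0 : ℝ), p + ε • d ∈ polySet A c ∧ p - ε • d ∈ polySet A c := by
  have key : ∀ j, ∀ᶠ t in 𝓝[>] (0 : ℝ), A j p + t * A j d ≤ c j ∧ A j p - t * A j d ≤ c j := by
    intro j
    rcases (hp j).lt_or_eq with hlt | heq
    · have h1 : Tendsto (fun t : ℝ => A j p + t * A j d) (𝓝[>] 0) (𝓝 (A j p + 0 * A j d)) :=
        (Continuous.tendsto (by fun_prop) 0).mono_left nhdsWithin_le_nhds
      have h2 : Tendsto (fun t : ℝ => A j p - t * A j d) (𝓝[>] 0) (𝓝 (A j p - 0 * A j d)) :=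
        (Continuous.tendsto (by fun_prop) 0).mono_left nhdsWithin_le_nhds
      filter_upwards [h1.eventually_lt_const (by simpa using hlt),
        h2.eventually_lt_const (by simpa using hlt)] with t a b
      exact ⟨a.le, b.le⟩
    · exact Eventually.of_forall fun t => by simp [hd j heq, heq]
  obtain ⟨ε, h1, h2⟩ := ((eventually_all.2 key).and self_mem_nhdsWithin).exists
  refine ⟨ε, h2, fun j => ?_, fun j => ?_⟩
  · simpa using (h1 j).1
  · simpa using (h1 j).2

lemma poly_ext_iff (A : ι → E →ₗ[ℝ] ℝ) (c : ι → ℝ) (p : E) :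
    p ∈ (polySet A c).extremePoints ℝ ↔
      p ∈ polySet A c ∧ ∀ d, (∀ j, A j p = c j → A j d = 0) → d = 0 := by
  constructor
  · intro hp
    refine ⟨hp.1, fun d hd => ?_⟩
    obtain ⟨ε, hε, h1, h2⟩ := poly_move A c hp.1 hd
    have h3 : p ∈ openSegment ℝ (p + ε • d) (p - ε • d) := by
      refine ⟨1/2, 1/2, by norm_num, by norm_num, by norm_num, ?_⟩
      module
    have h4 := hp.2 h1 h2 h3
    have h5 : ε • d = 0 := by simpa using h4
    exact (smul_eq_zero.1 h5).resolve_left hε.ne'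
  · rintro ⟨hp, hd⟩
    refine ⟨hp, fun x hx y hy hxy => ?_⟩
    obtain ⟨a, b, ha, hb, hab, rfl⟩ := hxy
    have hb' : b = 1 - a := by linarith
    subst hb'
    have h0 : x - y = 0 := by
      apply hd
      intro j hj
      have := hx j
      have := hy j
      simp only [map_add, map_smul, smul_eq_mul] at hj
      simp only [map_sub]
      have h6 : A j x = c j := by
        by_contra hne
        have := lt_of_le_of_ne (hx j) hne
        nlinarith
      have h7 : A j y = c j := by
        by_contra hne
        have := lt_of_le_of_ne (hy j) hne
        nlinarith
      linarith
    have h1 : x = y := sub_eq_zero.1 h0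
    subst h1
    module

lemma poly_ext_finite (A : ι → E →ₗ[ℝ] ℝ) (c : ι → ℝ) :
    ((polySet A c).extremePoints ℝ).Finite := by
  apply Set.Finite.of_injOn (f := fun p => {j | A j p = c j}) (t := Set.univ)
    (fun _ _ => Set.mem_univ _) _ Set.finite_univ
  intro p hp q hq hpq
  rw [poly_ext_iff] at hp
  have := hp.2 (p - q) (fun j hj => by
    have : j ∈ {j | A j q = c j} := by
      have h : {j | A j p = c j} = {j | A j q = c j} := hpq
      rw [← h]; exact hj
    have h2 : A j q = c j := this
    simp [hj, h2])
  exact sub_eq_zero.1 this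

lemma poly_go (A : ι → E →ₗ[ℝ] ℝ) (c : ι → ℝ) {p d : E} (hp : p ∈ polySet A c)
    (hd : ∀ j, A j p = c j → A j d = 0) (h0 : ∃ j, 0 < A j d) :
    ∃ b > (0 : ℝ), p + b • d ∈ polySet A c ∧
      (Finset.univ.filter fun j => A j (p + b • d) < c j).card <
        (Finset.univ.filter fun j => A j p < c j).card := by
  obtain ⟨j0, hj0⟩ := h0
  obtain ⟨k, hk, hmin⟩ := Finset.exists_min_image (Finset.univ.filter fun j => 0 < A j d)
    (fun j => (c j - A j p) / A j d) ⟨j0, by simpa using hj0⟩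
  simp only [Finset.mem_filter, Finset.mem_univ, true_and] at hk hmin
  have hkp : A k p < c k := lt_of_le_of_ne (hp k) (fun h => hk.ne' (hd k h))
  have hb : 0 < (c k - A k p) / A k d := div_pos (by linarith) hk
  refine ⟨_, hb, fun j => ?_, ?_⟩
  · simp only [map_add, map_smul, smul_eq_mul]
    rcases le_or_gt (A j d) 0 with h | h
    · have := hp j
      nlinarith [mul_nonneg hb.le (neg_nonneg.2 h)]
    · have := hmin j h
      rw [le_div_iff₀ h] at this
      linarith
  · apply Finset.card_lt_card
    rw [Finset.ssubset_iff_of_subset]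
    · refine ⟨k, by simpa using hkp, ?_⟩
      simp only [Finset.mem_filter, Finset.mem_univ, true_and, map_add, map_smul, smul_eq_mul]
      rw [div_mul_cancel₀ _ hk.ne']
      linarith
    · intro j
      simp only [Finset.mem_filter, Finset.mem_univ, true_and, map_add, map_smul, smul_eq_mul]
      intro h
      refine lt_of_le_of_ne (hp j) (fun h' => ?_)
      rw [hd j h', h'] at h
      simp at h

lemma poly_step (A : ι → E →ₗ[ℝ] ℝ) (c : ι → ℝ) (G : E → ℝ)
    (hG : ConcaveOn ℝ (polySet A c) G) (m : ℝ) (hm : ∀ p ∈ polySet A c, m ≤ G p)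
    {p d : E} (hp : p ∈ polySet A c)
    (hd : ∀ j, A j p = c j → A j d = 0) (h0 : ∃ j, 0 < A j d) :
    ∃ q ∈ polySet A c, G q ≤ G p ∧
      (Finset.univ.filter fun j => A j q < c j).card <
        (Finset.univ.filter fun j => A j p < c j).card := by
  obtain ⟨b, hb, hq, hc⟩ := poly_go A c hp hd h0
  -- concavity inequality along the line
  have conc : ∀ t > (0 : ℝ), p + t • (-d) ∈ polySet A c →
      t * G (p + b • d) + b * G (p + t • (-d)) ≤ (t + b) * G p := by
    intro t ht hmem
    have htb : 0 < t + b := by linarith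
    have h1 := hG.2 hq hmem (show 0 ≤ t / (t + b) by positivity)
      (show 0 ≤ b / (t + b) by positivity) (by field_simp)
    have h2 : (t / (t + b)) • (p + b • d) + (b / (t + b)) • (p + t • (-d)) = p := by
      have e1 : b / (t + b) = 1 - t / (t + b) := by field_simp; ring
      have e2 : t / (t + b) * b = (1 - t / (t + b)) * t := by field_simp; ring
      rw [e1]
      have : (t / (t + b)) • (p + b • d) + (1 - t / (t + b)) • (p + t • (-d))
        = p + (t / (t + b) * b - (1 - t / (t + b)) * t) • d := by module
      rw [this, e2]; simp
    rw [h2] at h1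
    simp only [smul_eq_mul] at h1
    have h3 : t / (t + b) * G (p + b • d) + b / (t + b) * G (p + t • (-d)) =
      (t * G (p + b • d) + b * G (p + t • (-d))) / (t + b) := by ring
    rw [h3, div_le_iff₀ htb] at h1
    linarith
  by_cases h1 : ∃ j, 0 < A j (-d)
  · obtain ⟨b', hb', hq', hc'⟩ := poly_go A c (d := -d) hp (fun j hj => by simp [hd j hj]) h1
    have := conc b' hb' hq'
    rcases le_or_gt (G (p + b • d)) (G p) with h | h
    · exact ⟨_, hq, h, hc⟩
    · refine ⟨_, hq', ?_, hc'⟩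
      by_contra hcon
      push Not at hcon
      nlinarith [mul_pos hb' (sub_pos.2 h), mul_pos hb (sub_pos.2 hcon)]
  · push Not at h1
    refine ⟨_, hq, ?_, hc⟩
    have hmem : ∀ t > (0 : ℝ), p + t • (-d) ∈ polySet A c := by
      intro t ht j
      have h2 := hp j
      have h3 := h1 j
      have h4 : A j (p + t • (-d)) = A j p + t * A j (-d) := by simp only [map_add, map_smul, smul_eq_mul]
      rw [h4]
      nlinarith
    by_contra hcon
    push Not at hcon
    set δ := G (p + b • d) - G p with hδ
    have hδ0 : 0 < δ := by linarith
    have hmp := hm p hp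
    set t := b * (G p - m + 1) / δ with ht
    have ht0 : 0 < t := by
      apply div_pos _ hδ0
      apply mul_pos hb; linarith
    have h5 := conc t ht0 (hmem t ht0)
    have h6 := hm _ (hmem t ht0)
    have h7 : t * δ = b * (G p - m + 1) := by rw [ht]; field_simp
    rw [hδ] at h7
    nlinarith [mul_le_mul_of_nonneg_left h6 hb.le]

lemma poly_vertex_le (A : ι → E →ₗ[ℝ] ℝ) (c : ι → ℝ) (G : E → ℝ)
    (hker : ∀ d, (∀ j, A j d = 0) → d = 0)
    (hG : ConcaveOn ℝ (polySet A c) G) (m : ℝ) (hm : ∀ p ∈ polySet A c, m ≤ G p) :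
    ∀ (N : ℕ) (p : E), p ∈ polySet A c →
      (Finset.univ.filter fun j => A j p < c j).card = N →
      ∃ v ∈ (polySet A c).extremePoints ℝ, G v ≤ G p := by
  intro N
  induction N using Nat.strong_induction_on with
  | _ N ih =>
    intro p hp hN
    by_cases hext : p ∈ (polySet A c).extremePoints ℝ
    · exact ⟨p, hext, le_rfl⟩
    rw [poly_ext_iff] at hext
    push Not at hext
    obtain ⟨d, hd, hd0⟩ := hext hp
    have hj : ∃ j, A j d ≠ 0 := by
      by_contra hcon
      push Not at hcon
      exact hd0 (hker d hcon)
    obtain ⟨j, hj⟩ := hj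
    have : ∃ q ∈ polySet A c, G q ≤ G p ∧
      (Finset.univ.filter fun j => A j q < c j).card <
        (Finset.univ.filter fun j => A j p < c j).card := by
      rcases lt_or_gt_of_ne hj with h | h
      · exact poly_step A c G hG m hm (d := -d) hp (fun j hj => by simp [hd j hj])
          ⟨j, by simpa using h⟩
      · exact poly_step A c G hG m hm hp hd ⟨j, h⟩
    obtain ⟨q, hq, hle, hlt⟩ := this
    obtain ⟨v, hv, hv'⟩ := ih _ (hN ▸ hlt) q hq rfl
    exact ⟨v, hv, hv'.trans hle⟩

lemma poly_min (A : ι → E →ₗ[ℝ] ℝ) (c : ι → ℝ) (G : E → ℝ)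
    (hker : ∀ d, (∀ j, A j d = 0) → d = 0) (hne : (polySet A c).Nonempty)
    (hG : ConcaveOn ℝ (polySet A c) G) (m : ℝ) (hm : ∀ p ∈ polySet A c, m ≤ G p) :
    ∃ v ∈ (polySet A c).extremePoints ℝ, ∀ q ∈ polySet A c, G v ≤ G q := by
  obtain ⟨p, hp⟩ := hne
  obtain ⟨v0, hv0, -⟩ := poly_vertex_le A c G hker hG m hm _ p hp rfl
  obtain ⟨v, hv, hmin⟩ := Set.exists_min_image _ G (poly_ext_finite A c) ⟨v0, hv0⟩
  refine ⟨v, hv, fun q hq => ?_⟩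
  obtain ⟨w, hw, hwq⟩ := poly_vertex_le A c G hker hG m hm _ q hq rfl
  exact (hmin w hw).trans hwq

lemma poly_isPolyhedral (A : ι → E →ₗ[ℝ] ℝ) (c : ι → ℝ) : IsPolyhedral (polySet A c) := by
  refine ⟨Fintype.card ι, fun j => A ((Fintype.equivFin ι).symm j),
    fun j => c ((Fintype.equivFin ι).symm j), ?_⟩
  ext p
  constructor
  · intro h j; exact h _
  · intro h j; simpa using h (Fintype.equivFin ι j)

end PolyHelpers

/-- Corollary 1: if each `r_θ` is concave on `[0,∞)`, `K` is a polyhedral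
convex set with a vertex, and `f` is concave and bounded below on `K`, then `Ω₁` is
polyhedral with a vertex, the vertex solutions `P̄_θ` are nonempty, and for `θ` large
they are global solutions of the ℓ0-problem. -/
theorem stmt_5 {n m : ℕ}
    (K : Set ((Fin n → ℝ) × (Fin m → ℝ))) (hK : Convex ℝ K)
    (g h : (Fin n → ℝ) × (Fin m → ℝ) → ℝ)
    (hg : ConvexOn ℝ Set.univ g) (hh : ConvexOn ℝ Set.univ h)
    (f : (Fin n → ℝ) × (Fin m → ℝ) → ℝ) (hf : ∀ p, f p = g p - h p)
    (lam : ℝ) (hlam : 0 < lam)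
    (r φ ψ : ℝ → ℝ → ℝ) (hA : Assumption1 r φ ψ)
    (hconc : ∀ θ > (0 : ℝ), ConcaveOn ℝ (Set.Ici 0) (r θ))
    (hKpoly : IsPolyhedral K) (hKvert : (K.extremePoints ℝ).Nonempty)
    (hfconc : ConcaveOn ℝ K f) (hfbdd : ∃ c, ∀ p ∈ K, c ≤ f p)
    (Ω₁ : Set (((Fin n → ℝ) × (Fin m → ℝ)) × (Fin n → ℝ)))
    (hΩ : Ω₁ = {pz | pz.1 ∈ K ∧ ∀ i, |pz.1.1 i| ≤ pz.2 i})
    (P : Set ((Fin n → ℝ) × (Fin m → ℝ)))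
    (hP : P = {p | p ∈ K ∧ ∀ q ∈ K,
      f p + lam * zeroNorm p.1 ≤ f q + lam * zeroNorm q.1})
    (Pbar : ℝ → Set ((Fin n → ℝ) × (Fin m → ℝ)))
    (hPbar : ∀ θ, Pbar θ = {p | ∃ z : Fin n → ℝ,
      (p, z) ∈ Ω₁.extremePoints ℝ ∧
      ∀ qz ∈ Ω₁, f p + lam * ∑ i, r θ (z i) ≤ f qz.1 + lam * ∑ i, r θ (qz.2 i)}) :
    IsPolyhedral Ω₁ ∧ (Ω₁.extremePoints ℝ).Nonempty ∧
    (∀ θ > (0 : ℝ), (Pbar θ).Nonempty) ∧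
    ∃ θ₀ > (0 : ℝ), ∀ θ ≥ θ₀, Pbar θ ⊆ P := by
  obtain ⟨N, A, c, hKA⟩ := hKpoly
  obtain ⟨hA1, -, hA3, -⟩ := hA
  obtain ⟨p0, hp0⟩ := hKvert
  have hkerK : ∀ d, (∀ j, A j d = 0) → d = 0 := by
    have : p0 ∈ (polySet A c).extremePoints ℝ := by
      rw [hKA] at hp0; exact hp0
    rw [poly_ext_iff] at this
    exact fun d hd => this.2 d fun j _ => hd j
  let px : Fin n → (((Fin n → ℝ) × (Fin m → ℝ)) × (Fin n → ℝ)) →ₗ[ℝ] ℝ := fun i =>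
    (LinearMap.proj i).comp ((LinearMap.fst ℝ _ _).comp (LinearMap.fst ℝ _ _))
  let pz : Fin n → (((Fin n → ℝ) × (Fin m → ℝ)) × (Fin n → ℝ)) →ₗ[ℝ] ℝ := fun i =>
    (LinearMap.proj i).comp (LinearMap.snd ℝ _ _)
  have hpx : ∀ i q, px i q = q.1.1 i := fun i q => rfl
  have hpz : ∀ i q, pz i q = q.2 i := fun i q => rfl
  let B : Fin N ⊕ (Fin n ⊕ Fin n) → (((Fin n → ℝ) × (Fin m → ℝ)) × (Fin n → ℝ)) →ₗ[ℝ] ℝ :=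
    Sum.elim (fun j => (A j).comp (LinearMap.fst ℝ _ _))
      (Sum.elim (fun i => px i - pz i) (fun i => - px i - pz i))
  let e : Fin N ⊕ (Fin n ⊕ Fin n) → ℝ := Sum.elim c (fun _ => 0)
  have hΩB : Ω₁ = polySet B e := by
    rw [hΩ, hKA]
    ext q
    simp only [polySet, Set.mem_setOf_eq, Sum.forall, B, e, Sum.elim_inl, Sum.elim_inr,
      LinearMap.comp_apply, LinearMap.fst_apply, LinearMap.sub_apply, LinearMap.neg_apply,
      hpx, hpz]
    refine and_congr_right fun _ => ?_
    rw [← forall_and]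
    refine forall_congr' fun i => ?_
    rw [abs_le]
    constructor
    · rintro ⟨h1, h2⟩; constructor <;> linarith
    · rintro ⟨h1, h2⟩; constructor <;> linarith
  have hkerB : ∀ d, (∀ j, B j d = 0) → d = 0 := by
    intro d hd
    have h1 : d.1 = 0 := hkerK _ fun j => hd (Sum.inl j)
    have h2 : d.2 = 0 := by
      funext i
      have : d.1.1 i - d.2 i = 0 := hd (Sum.inr (Sum.inl i))
      rw [h1] at this
      simpa using this
    exact Prod.ext h1 h2
  have hmemΩ : ∀ q, q ∈ Ω₁ ↔ q.1 ∈ K ∧ ∀ i, |q.1.1 i| ≤ q.2 i := fun q => by rw [hΩ]; rfl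
  have hlift : ∀ q ∈ K, ((q, fun i => |q.1 i|) : _ × (Fin n → ℝ)) ∈ Ω₁ := fun q hq =>
    (hmemΩ _).2 ⟨hq, fun i => le_rfl⟩
  have hne : (polySet B e).Nonempty := hΩB ▸ ⟨_, hlift p0 hp0.1⟩
  have hconvΩ : Convex ℝ (polySet B e) := by
    intro p hp q hq a b ha hb hab j
    have h1 := hp j
    have h2 := hq j
    simp only [map_add, map_smul, smul_eq_mul]
    calc a * B j p + b * B j q ≤ a * e j + b * e j := by gcongr
      _ = e j := by rw [← add_mul, hab, one_mul]
  have hz0 : ∀ q ∈ Ω₁, ∀ i, 0 ≤ q.2 i := fun q hq i =>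
    (abs_nonneg _).trans (((hmemΩ q).1 hq).2 i)
  obtain ⟨c0, hc0⟩ := hfbdd
  have hmin : ∀ θ > (0 : ℝ), ∃ v ∈ (polySet B e).extremePoints ℝ, ∀ q ∈ polySet B e,
      f v.1 + lam * ∑ i, r θ (v.2 i) ≤ f q.1 + lam * ∑ i, r θ (q.2 i) := by
    intro θ hθ
    refine poly_min B e (fun q => f q.1 + lam * ∑ i, r θ (q.2 i)) hkerB hne ⟨hconvΩ, ?_⟩
      (c0 + lam * ∑ _i : Fin n, r θ 0) ?_
    · intro p hp q hq a b ha hb hab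
      rw [← hΩB] at hp hq
      have h1 := hfconc.2 ((hmemΩ p).1 hp).1 ((hmemΩ q).1 hq).1 ha hb hab
      have h2 : ∑ i, (a * r θ (p.2 i) + b * r θ (q.2 i)) ≤ ∑ i, r θ ((a • p + b • q).2 i) := by
        refine Finset.sum_le_sum fun i _ => ?_
        exact (hconc θ hθ).2 (hz0 p hp i) (hz0 q hq i) ha hb hab
      rw [Finset.sum_add_distrib, ← Finset.mul_sum, ← Finset.mul_sum] at h2
      have h3 := mul_le_mul_of_nonneg_left h2 hlam.le
      simp only [smul_eq_mul] at h1 ⊢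
      have h4 : (a • p + b • q).1 = a • p.1 + b • q.1 := rfl
      rw [h4]
      linarith
    · intro q hq
      rw [← hΩB] at hq
      have h1 := hc0 _ ((hmemΩ q).1 hq).1
      have h2 : ∑ _i : Fin n, r θ 0 ≤ ∑ i, r θ (q.2 i) :=
        Finset.sum_le_sum fun i _ => hA3 θ hθ Set.self_mem_Ici (hz0 q hq i) (hz0 q hq i)
      have h3 := mul_le_mul_of_nonneg_left h2 hlam.le
      linarith
  -- vertices satisfy z = |x|
  have hvz : ∀ v ∈ Ω₁.extremePoints ℝ, v.2 = fun i => |v.1.1 i| := by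
    intro v hv
    have hvΩ := (hmemΩ v).1 hv.1
    have h1 : (v.1, fun i => |v.1.1 i|) ∈ Ω₁ := hlift _ hvΩ.1
    have h2 : (v.1, fun i => 2 * v.2 i - |v.1.1 i|) ∈ Ω₁ :=
      (hmemΩ _).2 ⟨hvΩ.1, fun i => by have := hvΩ.2 i; dsimp only; linarith⟩
    have h3 := hv.2 h1 h2 ⟨1/2, 1/2, by norm_num, by norm_num, by norm_num, by
      refine Prod.ext ?_ ?_
      · change (1/2 : ℝ) • v.1 + (1/2 : ℝ) • v.1 = v.1
        module
      · funext i
        simp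
        ring⟩
    exact (congrArg Prod.snd h3).symm
  have hlim : ∀ p : (Fin n → ℝ) × (Fin m → ℝ),
      Tendsto (fun θ => f p + lam * ∑ i, r θ (|p.1 i|)) atTop
        (𝓝 (f p + lam * zeroNorm p.1)) := by
    intro p
    have hz : zeroNorm p.1 = ∑ i, stepFn |p.1 i| := by
      simp only [zeroNorm, stepFn, Finset.card_filter, abs_eq_zero, Nat.cast_sum]
      refine Finset.sum_congr rfl fun i _ => ?_
      by_cases h : p.1 i = 0 <;> simp [h]
    rw [hz]
    exact (tendsto_finsetSum _ fun i _ => hA1 _).const_mul lam |>.const_add _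
  have hfin : (Ω₁.extremePoints ℝ).Finite := hΩB ▸ poly_ext_finite B e
  refine ⟨hΩB ▸ poly_isPolyhedral B e, ?_, ?_, ?_⟩
  · obtain ⟨v, hv, -⟩ := hmin 1 one_pos
    exact ⟨v, hΩB ▸ hv⟩
  · intro θ hθ
    obtain ⟨v, hv, hv'⟩ := hmin θ hθ
    rw [← hΩB] at hv hv'
    exact ⟨v.1, by rw [hPbar]; exact ⟨v.2, hv, hv'⟩⟩
  · have hev : ∀ v ∈ Ω₁.extremePoints ℝ, ∀ᶠ θ in atTop, v.1 ∉ P →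
        ∃ q ∈ K, f q + lam * ∑ i, r θ (|q.1 i|) < f v.1 + lam * ∑ i, r θ (|v.1.1 i|) := by
      intro v hv
      by_cases hvP : v.1 ∈ P
      · exact Eventually.of_forall fun θ h => absurd hvP h
      have hvK := ((hmemΩ v).1 hv.1).1
      have : ∃ q ∈ K, f q + lam * zeroNorm q.1 < f v.1 + lam * zeroNorm v.1.1 := by
        by_contra hcon
        push Not at hcon
        exact hvP (by rw [hP]; exact ⟨hvK, hcon⟩)
      obtain ⟨q, hq, hlt⟩ := this
      filter_upwards [(hlim q).eventually_lt (hlim v.1) hlt] with θ hθ _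
      exact ⟨q, hq, hθ⟩
    obtain ⟨T, hT⟩ := eventually_atTop.1 ((hfin.eventually_all).2 hev)
    refine ⟨max T 1, by positivity, fun θ hθ p hp => ?_⟩
    rw [hPbar] at hp
    obtain ⟨z, hz, hzmin⟩ := hp
    by_contra hcon
    obtain ⟨q, hq, hlt⟩ := hT θ ((le_max_left _ _).trans hθ) (p, z) hz hcon
    have h1 : z = fun i => |p.1 i| := hvz _ hz
    have h2 := hzmin _ (hlift q hq)
    subst h1
    exact absurd hlt (not_lt.2 h2)
end

section
/- A point (x*,y*) ∈ K is a local minimizer of the ℓ0-problem, i.e. of F(x,y) = f(x,y) + λ‖x‖₀ on K, if and only if (x*,y*) is a local minimizer of f on K(x*), where K(x*) = {(x,y) ∈ K : x_i = 0 for every index i with x*_i = 0}. -/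
/-- `(x*,y*)` is a local minimizer of the ℓ0-problem on `K` iff it is a
local minimizer of `f` on `K(x*) = {(x,y) ∈ K : x_i = 0 whenever x*_i = 0}`. -/
theorem stmt_6 {n m : ℕ}
    (K : Set ((Fin n → ℝ) × (Fin m → ℝ))) (hK : Convex ℝ K)
    (g h : (Fin n → ℝ) × (Fin m → ℝ) → ℝ)
    (hg : ConvexOn ℝ Set.univ g) (hh : ConvexOn ℝ Set.univ h)
    (f : (Fin n → ℝ) × (Fin m → ℝ) → ℝ) (hf : ∀ p, f p = g p - h p)
    (lam : ℝ) (hlam : 0 < lam)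
    (pstar : (Fin n → ℝ) × (Fin m → ℝ)) (hpstar : pstar ∈ K) :
    (∃ δ > (0 : ℝ), ∀ q ∈ K, ‖q - pstar‖ < δ →
      f pstar + lam * zeroNorm pstar.1 ≤ f q + lam * zeroNorm q.1) ↔
    (∃ δ > (0 : ℝ), ∀ q ∈ K, (∀ i, pstar.1 i = 0 → q.1 i = 0) →
      ‖q - pstar‖ < δ → f pstar ≤ f q) := by
  constructor
  · rintro ⟨δ, hδ, H⟩
    refine ⟨δ, hδ, fun q hq hz hd => ?_⟩
    have h1 := H q hq hd
    have h2 : zeroNorm q.1 ≤ zeroNorm pstar.1 := by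
      unfold zeroNorm
      have : (Finset.univ.filter fun i => q.1 i ≠ 0).card
          ≤ (Finset.univ.filter fun i => pstar.1 i ≠ 0).card := by
        apply Finset.card_le_card
        intro i
        simp only [Finset.mem_filter, Finset.mem_univ, true_and]
        exact fun a b => a (hz i b)
      exact_mod_cast this
    nlinarith [mul_le_mul_of_nonneg_left h2 hlam.le]
  · rintro ⟨δ, hδ, H⟩
    have cg : Continuous g := continuousOn_univ.1 (hg.continuousOn isOpen_univ)
    have ch : Continuous h := continuousOn_univ.1 (hh.continuousOn isOpen_univ)
    have cf : Continuous f := by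
      have : f = fun p => g p - h p := funext hf
      rw [this]
      exact cg.sub ch
    have e1 : ∀ᶠ q in nhds pstar, f pstar - lam < f q :=
      cf.continuousAt.eventually (lt_mem_nhds (by linarith))
    have e2 : ∀ᶠ q in nhds pstar, ∀ i, pstar.1 i ≠ 0 → q.1 i ≠ 0 := by
      rw [Filter.eventually_all]
      intro i
      by_cases hi : pstar.1 i = 0
      · simp [hi]
      · have c : Continuous fun q : (Fin n → ℝ) × (Fin m → ℝ) => q.1 i := by fun_prop
        filter_upwards [c.continuousAt.eventually_ne hi] with q hq _
        exact hq
    obtain ⟨ε, hε, he⟩ := Metric.eventually_nhds_iff.1 (e1.and e2)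
    refine ⟨min δ ε, lt_min hδ hε, fun q hq hd => ?_⟩
    obtain ⟨h1, h2⟩ := he (y := q) (by rw [dist_eq_norm]; exact hd.trans_le (min_le_right _ _))
    have hsub : (Finset.univ.filter fun i => pstar.1 i ≠ 0)
        ⊆ (Finset.univ.filter fun i => q.1 i ≠ 0) := by
      intro i
      simpa only [Finset.mem_filter, Finset.mem_univ, true_and] using h2 i
    by_cases hz : ∀ i, pstar.1 i = 0 → q.1 i = 0
    · have h3 := H q hq hz (hd.trans_le (min_le_left _ _))
      have h4 : zeroNorm pstar.1 ≤ zeroNorm q.1 := by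
        unfold zeroNorm
        exact_mod_cast Finset.card_le_card hsub
      nlinarith [mul_le_mul_of_nonneg_left h4 hlam.le]
    · push Not at hz
      obtain ⟨i, hi, hi'⟩ := hz
      have h4 : zeroNorm pstar.1 + 1 ≤ zeroNorm q.1 := by
        unfold zeroNorm
        have : (Finset.univ.filter fun i => pstar.1 i ≠ 0).card
            < (Finset.univ.filter fun i => q.1 i ≠ 0).card := by
          apply Finset.card_lt_card
          refine (Finset.ssubset_iff_of_subset hsub).2 ⟨i, ?_, ?_⟩
          · simpa using hi'
          · simpa using hi
        exact_mod_cast this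
      nlinarith [mul_le_mul_of_nonneg_left h4 hlam.le]
end

section
/- If (x*,y*) ∈ K is a local minimizer of the ℓ0-problem, then there exist (x_g,y_g) ∈ ∂g(x*,y*) and (x_h,y_h) ∈ ∂h(x*,y*) such that, setting (x̄*,ȳ*) = (x_g,y_g) − (x_h,y_h), one has ⟨x̄*, x − x*⟩ + ⟨ȳ*, y − y*⟩ ≥ 0 for all (x,y) ∈ K(x*), where K(x*) = {(x,y) ∈ K : x_i = 0 for every index i with x*_i = 0}. -/
/-- Canonical inner product on `ℝⁿ × ℝᵐ`. -/
def dotE {n m : ℕ} (u v : (Fin n → ℝ) × (Fin m → ℝ)) : ℝ :=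
  (∑ i, u.1 i * v.1 i) + (∑ j, u.2 j * v.2 j)

/-- Convex subdifferential of a finite function on `ℝⁿ × ℝᵐ`. -/
def subdiffE {n m : ℕ} (φ : (Fin n → ℝ) × (Fin m → ℝ) → ℝ)
    (p : (Fin n → ℝ) × (Fin m → ℝ)) : Set ((Fin n → ℝ) × (Fin m → ℝ)) :=
  {v | ∀ q, φ q ≥ φ p + dotE (q - p) v}

lemma exists_subgrad_sep {E : Type*} [NormedAddCommGroup E] [NormedSpace ℝ E]
    [FiniteDimensional ℝ E] (φ : E → ℝ) (hφ : ConvexOn ℝ Set.univ φ) (C : Set E)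
    (hC : Convex ℝ C) (p : E) (hp : p ∈ C) (hmin : ∀ q ∈ C, φ p ≤ φ q) :
    ∃ l : E →L[ℝ] ℝ, (∀ q, φ p + l (q - p) ≤ φ q) ∧ ∀ q ∈ C, 0 ≤ l (q - p) := by
  have hcont : Continuous φ := by
    have := hφ.continuousOn isOpen_univ
    rwa [continuousOn_univ] at this
  have hs1 : Convex ℝ {z : E × ℝ | φ z.1 < z.2} := by
    simpa using hφ.convex_strict_epigraph
  have hs2 : IsOpen {z : E × ℝ | φ z.1 < z.2} :=
    isOpen_lt (hcont.comp continuous_fst) continuous_snd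
  have ht : Convex ℝ (C ×ˢ {φ p}) := hC.prod (convex_singleton _)
  have hd : Disjoint {z : E × ℝ | φ z.1 < z.2} (C ×ˢ {φ p}) := by
    rw [Set.disjoint_left]
    rintro ⟨q, t⟩ h1 ⟨h2, h3⟩
    simp only [Set.mem_ofPred_eq, Set.mem_singleton_iff] at h1 h2 h3
    have := hmin q h2
    linarith
  obtain ⟨F, u, hF1, hF2⟩ := geometric_hahn_banach_open hs1 hs2 ht hd
  have hdec : ∀ q t, F (q, t) = F (q, 0) + t * F (0, 1) := by
    intro q t
    have : ((q, t) : E × ℝ) = (q, 0) + t • (0, 1) := by simp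
    rw [this, map_add, map_smul, smul_eq_mul]
  set c := F (0, 1) with hc
  have h1 : ∀ q t, φ q < t → F (q, 0) + t * c < u := fun q t h => by
    rw [← hdec]; exact hF1 (q, t) h
  have h2 : ∀ q ∈ C, u ≤ F (q, 0) + φ p * c := fun q h => by
    rw [← hdec]; exact hF2 (q, φ p) ⟨h, rfl⟩
  have hcneg : c < 0 := by
    have a := h1 p (φ p + 1) (by linarith)
    have b := h2 p hp
    linarith
  have h3 : ∀ q, F (q, 0) + φ q * c ≤ u := by
    intro q
    by_contra hcon
    push Not at hcon
    have a := h1 q (φ q + (F (q, 0) + φ q * c - u) / (-c))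
      (by have := div_pos (sub_pos.2 hcon) (neg_pos.2 hcneg); linarith)
    have e : (F (q, 0) + φ q * c - u) / (-c) * c = -(F (q, 0) + φ q * c - u) := by
      have := hcneg.ne
      rw [div_mul_eq_mul_div, div_neg, mul_div_cancel_right₀ _ this]
    rw [add_mul, e] at a
    linarith
  refine ⟨(-c)⁻¹ • F.comp (ContinuousLinearMap.inl ℝ E ℝ), ?_, ?_⟩
  · intro q
    have a := h3 q
    have b := h2 p hp
    simp only [map_sub, smul_apply, ContinuousLinearMap.comp_apply,
      ContinuousLinearMap.inl_apply, smul_eq_mul]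
    have : (-c)⁻¹ * F (q, 0) - (-c)⁻¹ * F (p, 0) ≤ φ q - φ p := by
      rw [← mul_sub, inv_mul_le_iff₀ (neg_pos.2 hcneg)]
      linarith
    linarith
  · intro q hq
    have a := h3 p
    have b := h2 q hq
    simp only [map_sub, smul_apply, ContinuousLinearMap.comp_apply,
      ContinuousLinearMap.inl_apply, smul_eq_mul]
    rw [← mul_sub]
    exact mul_nonneg (inv_nonneg.2 (by linarith)) (by linarith)

lemma exists_dotE {n m : ℕ} (l : ((Fin n → ℝ) × (Fin m → ℝ)) →L[ℝ] ℝ) :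
    ∃ v, ∀ q, dotE q v = l q := by
  refine ⟨(fun i => l (Pi.single i 1, 0), fun j => l (0, Pi.single j 1)), fun q => ?_⟩
  have a := LinearMap.pi_apply_eq_sum_univ
    (l.comp (ContinuousLinearMap.inl ℝ (Fin n → ℝ) (Fin m → ℝ))).toLinearMap q.1
  have b := LinearMap.pi_apply_eq_sum_univ
    (l.comp (ContinuousLinearMap.inr ℝ (Fin n → ℝ) (Fin m → ℝ))).toLinearMap q.2
  have e : q = (q.1, 0) + (0, q.2) := by simp
  have s1 : ∀ {k : ℕ} (i : Fin k), (fun j => if i = j then (1:ℝ) else 0) = Pi.single i 1 := by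
    intro k i; ext j; simp [Pi.single_apply, eq_comm]
  simp only [s1] at a b
  conv_rhs => rw [e, map_add]
  simp at a b
  rw [a, b]
  rfl

lemma dotE_comm' {n m : ℕ} (u v : (Fin n → ℝ) × (Fin m → ℝ)) : dotE u v = dotE v u := by
  simp [dotE, mul_comm]

lemma dotE_sub' {n m : ℕ} (w u v : (Fin n → ℝ) × (Fin m → ℝ)) :
    dotE w (u - v) = dotE w u - dotE w v := by
  simp [dotE, mul_sub, Finset.sum_sub_distrib]; ring

/-- a local minimizer of the ℓ0-problem satisfies the first-order
condition `⟨x̄*, x - x*⟩ + ⟨ȳ*, y - y*⟩ ≥ 0` on `K(x*)` for some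
`(x̄*,ȳ*) ∈ ∂g(x*,y*) - ∂h(x*,y*)`. -/
theorem stmt_7 {n m : ℕ}
    (K : Set ((Fin n → ℝ) × (Fin m → ℝ))) (hK : Convex ℝ K)
    (g h : (Fin n → ℝ) × (Fin m → ℝ) → ℝ)
    (hg : ConvexOn ℝ Set.univ g) (hh : ConvexOn ℝ Set.univ h)
    (f : (Fin n → ℝ) × (Fin m → ℝ) → ℝ) (hf : ∀ p, f p = g p - h p)
    (lam : ℝ) (hlam : 0 < lam)
    (pstar : (Fin n → ℝ) × (Fin m → ℝ)) (hpstar : pstar ∈ K)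
    (hloc : ∃ δ > (0 : ℝ), ∀ q ∈ K, ‖q - pstar‖ < δ →
      f pstar + lam * zeroNorm pstar.1 ≤ f q + lam * zeroNorm q.1) :
    ∃ vg ∈ subdiffE g pstar, ∃ vh ∈ subdiffE h pstar,
      ∀ q ∈ K, (∀ i, pstar.1 i = 0 → q.1 i = 0) →
        0 ≤ dotE (vg - vh) (q - pstar) := by
  obtain ⟨lh, hlh, -⟩ := exists_subgrad_sep h hh {pstar} (convex_singleton _) pstar rfl
    (by rintro q rfl; exact le_rfl)
  set C : Set ((Fin n → ℝ) × (Fin m → ℝ)) := {q | q ∈ K ∧ ∀ i, pstar.1 i = 0 → q.1 i = 0} with hCdef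
  have hC : Convex ℝ C := by
    intro a ha b hb s t hs ht hst
    refine ⟨hK ha.1 hb.1 hs ht hst, fun i hi => ?_⟩
    simp [ha.2 i hi, hb.2 i hi]
  have hpC : pstar ∈ C := ⟨hpstar, fun _ hi => hi⟩
  have hG : ConvexOn ℝ Set.univ (fun q => g q - lh q) :=
    hg.sub (lh.toLinearMap.concaveOn convex_univ)
  have hmin : IsMinOn (fun q => g q - lh q) C pstar := by
    apply IsMinOn.of_isLocalMinOn_of_convexOn hpC _ (hG.subset (Set.subset_univ _) hC)
    obtain ⟨δ, hδ, H⟩ := hloc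
    have hb : Metric.ball pstar δ ∈ nhds pstar := Metric.ball_mem_nhds _ hδ
    filter_upwards [mem_nhdsWithin_of_mem_nhds hb, self_mem_nhdsWithin] with q hq hqC
    rw [mem_ball_iff_norm] at hq
    have h1 := H q hqC.1 hq
    have h2 : zeroNorm q.1 ≤ zeroNorm pstar.1 := by
      unfold zeroNorm
      apply Nat.cast_le.2
      apply Finset.card_le_card
      intro i
      simp only [Finset.mem_filter, Finset.mem_univ, true_and]
      exact fun hi hp => hi (hqC.2 i hp)
    have h3 := mul_le_mul_of_nonneg_left h2 hlam.le
    have h4 := hlh q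
    rw [hf, hf] at h1
    rw [map_sub] at h4
    linarith
  obtain ⟨l, hl1, hl2⟩ := exists_subgrad_sep _ hG C hC pstar hpC (fun q hq => hmin hq)
  obtain ⟨vg, hvg⟩ := exists_dotE (l + lh)
  obtain ⟨vh, hvh⟩ := exists_dotE lh
  refine ⟨vg, fun q => ?_, vh, fun q => ?_, fun q hq hq0 => ?_⟩
  · have := hl1 q
    rw [hvg, ContinuousLinearMap.add_apply, map_sub lh]
    linarith
  · rw [hvh]; exact hlh q
  · rw [dotE_comm', dotE_sub', hvg, hvh]
    have := hl2 q ⟨hq, hq0⟩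
    simpa using this
end

section
/- Suppose the family {r_θ}_{θ>0} satisfies Assumption 1 and K is compact. Then for every ε > 0 there exists θ(ε) > 0 such that L_θ ⊆ L + B(0,ε) for all θ ≥ θ(ε), where B(0,ε) denotes the open ball of radius ε centered at the origin of ℝⁿ × ℝᵐ. -/
open Filter Topology

theorem aux_cont {n m : ℕ} {g : (Fin n → ℝ) × (Fin m → ℝ) → ℝ}
    (hg : ConvexOn ℝ Set.univ g) : Continuous g := by
  have := hg.continuousOn isOpen_univ
  rwa [← continuousOn_univ]

theorem aux_single {n : ℕ} (i : Fin n) (c : ℝ) : ‖(Pi.single i c : Fin n → ℝ)‖ = |c| := by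
  refine le_antisymm ((pi_norm_le_iff_of_nonneg (abs_nonneg c)).2 fun j => ?_) ?_
  · by_cases h : j = i
    · subst h; simp
    · simp [h]
  · simpa using norm_le_pi_norm (Pi.single i c : Fin n → ℝ) i

theorem aux_bdd {n m : ℕ} (K : Set ((Fin n → ℝ) × (Fin m → ℝ))) (hKc : IsCompact K)
    (g : (Fin n → ℝ) × (Fin m → ℝ) → ℝ) (hg : ConvexOn ℝ Set.univ g) :
    ∃ M : ℝ, ∀ p ∈ K, ∀ v ∈ subdiffE g p, v ∈ Metric.closedBall 0 M := by
  have hc := aux_cont hg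
  have h1 : IsCompact (K ×ˢ Metric.closedBall (0 : (Fin n → ℝ) × (Fin m → ℝ)) 1) :=
    hKc.prod (isCompact_closedBall _ _)
  have hF : Continuous fun x : ((Fin n → ℝ) × (Fin m → ℝ)) × ((Fin n → ℝ) × (Fin m → ℝ)) =>
      g (x.1 + x.2) - g x.1 := by fun_prop
  obtain ⟨M, hM⟩ := h1.bddAbove_image hF.continuousOn
  refine ⟨M, fun p hp v hv => ?_⟩
  have key : ∀ w ∈ Metric.closedBall (0 : (Fin n → ℝ) × (Fin m → ℝ)) 1, dotE w v ≤ M := by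
    intro w hw
    have a : g (p + w) - g p ≤ M := hM ⟨(p, w), ⟨hp, hw⟩, rfl⟩
    have b := hv (p + w)
    rw [add_sub_cancel_left] at b
    linarith
  have hM0 : 0 ≤ M := by
    have := key 0 (by simp)
    simpa [dotE] using this
  rw [mem_closedBall_zero_iff, Prod.norm_def, max_le_iff, pi_norm_le_iff_of_nonneg hM0,
    pi_norm_le_iff_of_nonneg hM0]
  refine ⟨fun i => ?_, fun i => ?_⟩
  · rw [Real.norm_eq_abs, abs_le']
    constructor
    · have := key (Pi.single i 1, 0) (by simp [Prod.norm_def, aux_single])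
      simpa [dotE, Pi.single_apply] using this
    · have := key (Pi.single i (-1), 0) (by simp [Prod.norm_def, aux_single])
      simpa [dotE, Pi.single_apply] using this
  · rw [Real.norm_eq_abs, abs_le']
    constructor
    · have := key (0, Pi.single i 1) (by simp [Prod.norm_def, aux_single])
      simpa [dotE, Pi.single_apply] using this
    · have := key (0, Pi.single i (-1)) (by simp [Prod.norm_def, aux_single])
      simpa [dotE, Pi.single_apply] using this

theorem aux_dot {n m : ℕ} {u v : ℕ → (Fin n → ℝ) × (Fin m → ℝ)}
    {a b : (Fin n → ℝ) × (Fin m → ℝ)} (hu : Tendsto u atTop (𝓝 a)) (hv : Tendsto v atTop (𝓝 b)) :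
    Tendsto (fun k => dotE (u k) (v k)) atTop (𝓝 (dotE a b)) := by
  have u1 := fun i => ((continuous_apply i).tendsto _).comp ((continuous_fst.tendsto _).comp hu)
  have u2 := fun i => ((continuous_apply i).tendsto _).comp ((continuous_snd.tendsto _).comp hu)
  have v1 := fun i => ((continuous_apply i).tendsto _).comp ((continuous_fst.tendsto _).comp hv)
  have v2 := fun i => ((continuous_apply i).tendsto _).comp ((continuous_snd.tendsto _).comp hv)
  unfold dotE
  exact (tendsto_finsetSum _ fun i _ => (u1 i).mul (v1 i)).add
    (tendsto_finsetSum _ fun i _ => (u2 i).mul (v2 i))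

theorem aux_closed {n m : ℕ} {g : (Fin n → ℝ) × (Fin m → ℝ) → ℝ}
    (hg : ConvexOn ℝ Set.univ g) {u v : ℕ → (Fin n → ℝ) × (Fin m → ℝ)}
    {a b : (Fin n → ℝ) × (Fin m → ℝ)} (hu : Tendsto u atTop (𝓝 a)) (hv : Tendsto v atTop (𝓝 b))
    (h : ∀ k, v k ∈ subdiffE g (u k)) : b ∈ subdiffE g a := by
  intro q
  have hc := aux_cont hg
  exact le_of_tendsto' (((hc.tendsto a).comp hu).add (aux_dot (hu.const_sub q) hv))
    (fun k => h k q)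

open Pointwise in
/-- if `K` is compact, points satisfying the approximate stationarity
condition eventually lie in an `ε`-neighbourhood of `L`. -/
theorem stmt_9 {n m : ℕ}
    (K : Set ((Fin n → ℝ) × (Fin m → ℝ))) (hK : Convex ℝ K) (hKc : IsCompact K)
    (g h : (Fin n → ℝ) × (Fin m → ℝ) → ℝ)
    (hg : ConvexOn ℝ Set.univ g) (hh : ConvexOn ℝ Set.univ h)
    (f : (Fin n → ℝ) × (Fin m → ℝ) → ℝ) (hf : ∀ p, f p = g p - h p)
    (lam : ℝ) (hlam : 0 < lam)
    (r φ ψ : ℝ → ℝ → ℝ) (hA : Assumption1 r φ ψ)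
    (L : Set ((Fin n → ℝ) × (Fin m → ℝ)))
    (hL : L = {p | p ∈ K ∧ ∃ vg ∈ subdiffE g p, ∃ vh ∈ subdiffE h p,
      ∀ q ∈ K, (∀ i, p.1 i = 0 → q.1 i = 0) → 0 ≤ dotE (vg - vh) (q - p)})
    (Lθ : ℝ → Set ((Fin n → ℝ) × (Fin m → ℝ)))
    (hLθ : ∀ θ, Lθ θ = {p | p ∈ K ∧ ∃ vg ∈ subdiffE g p, ∃ vh ∈ subdiffE h p,
      ∃ zbar : Fin n → ℝ,
        (∀ i, ∃ μ ∈ rSubdiff (φ θ) (ψ θ) (p.1 i), zbar i = lam * μ) ∧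
        ∀ q ∈ K, 0 ≤ dotE (vg - vh) (q - p) + ∑ i, zbar i * (q.1 i - p.1 i)}) :
    ∀ ε > (0 : ℝ), ∃ Θ > (0 : ℝ), ∀ θ ≥ Θ, Lθ θ ⊆ L + Metric.ball 0 ε := by
  intro ε hε
  by_contra hcon
  push Not at hcon
  obtain ⟨-, -, -, -, h4, h5⟩ := hA
  have hseq : ∀ k : ℕ, ∃ θ : ℝ, (k : ℝ) + 1 ≤ θ ∧ ∃ p ∈ Lθ θ, p ∉ L + Metric.ball 0 ε := by
    intro k
    obtain ⟨θ, hθ, hn⟩ := hcon (k + 1) (by positivity)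
    obtain ⟨p, hp, hp'⟩ := Set.not_subset.1 hn
    exact ⟨θ, hθ, p, hp, hp'⟩
  choose θ hθ p hp hpn using hseq
  simp only [hLθ, Set.mem_ofPred_eq] at hp
  choose hpK vg hvg vh hvh z hz hq using hp
  obtain ⟨M1, hM1⟩ := aux_bdd K hKc g hg
  obtain ⟨M2, hM2⟩ := aux_bdd K hKc h hh
  have hcomp := hKc.prod ((isCompact_closedBall (0 : (Fin n → ℝ) × (Fin m → ℝ)) M1).prod
    (isCompact_closedBall (0 : (Fin n → ℝ) × (Fin m → ℝ)) M2))
  obtain ⟨⟨P, G, H⟩, hmem, σ, hσ, hlim⟩ := hcomp.tendsto_subseq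
    (x := fun k => (p k, vg k, vh k))
    (fun k => ⟨hpK k, hM1 _ (hpK k) _ (hvg k), hM2 _ (hpK k) _ (hvh k)⟩)
  have lP : Tendsto (fun k => p (σ k)) atTop (𝓝 P) := (continuous_fst.tendsto _).comp hlim
  have lG : Tendsto (fun k => vg (σ k)) atTop (𝓝 G) :=
    ((continuous_fst.comp continuous_snd).tendsto _).comp hlim
  have lH : Tendsto (fun k => vh (σ k)) atTop (𝓝 H) :=
    ((continuous_snd.comp continuous_snd).tendsto _).comp hlim
  have lPi : ∀ i, Tendsto (fun k => (p (σ k)).1 i) atTop (𝓝 (P.1 i)) := fun i =>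
    (((continuous_apply i).comp continuous_fst).tendsto P).comp lP
  have lθ : Tendsto (fun k => θ (σ k)) atTop atTop := by
    have : Tendsto θ atTop atTop :=
      tendsto_atTop_mono (fun k => by linarith [hθ k]) tendsto_natCast_atTop_atTop
    exact this.comp hσ.tendsto_atTop
  have lz : ∀ i, P.1 i ≠ 0 → Tendsto (fun k => z (σ k) i) atTop (𝓝 0) := by
    intro i hi
    rw [Metric.tendsto_atTop']
    intro δ hδ
    have hpos : 0 < |P.1 i| / 2 := by positivity
    have h0 : (0 : ℝ) ∉ Set.Icc (P.1 i - |P.1 i| / 2) (P.1 i + |P.1 i| / 2) := by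
      rintro ⟨h1, h2⟩
      rcases abs_cases (P.1 i) with h | h <;> linarith [h.1, h.2]
    obtain ⟨Θ, hΘ⟩ := h5 _ _ (by linarith) h0 (δ / (2 * lam)) (by positivity)
    have e1 := lθ.eventually_ge_atTop Θ
    have e2 := (lPi i).eventually (Metric.closedBall_mem_nhds _ hpos)
    obtain ⟨N, hN⟩ := eventually_atTop.1 (e1.and e2)
    refine ⟨N, fun k hk => ?_⟩
    obtain ⟨a, b⟩ := hN k hk.le
    obtain ⟨μ, hμ, hzμ⟩ := hz (σ k) i
    rw [← Metric.mem_closedBall, Real.closedBall_eq_Icc] at b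
    have c := hΘ _ a _ b _ hμ
    rw [dist_zero_right, Real.norm_eq_abs, hzμ, abs_mul, abs_of_pos hlam]
    calc lam * |μ| ≤ lam * (δ / (2 * lam)) := by gcongr
      _ = δ / 2 := by field_simp
      _ < δ := by linarith
  have hPL : P ∈ L := by
    rw [hL]
    refine ⟨hmem.1, G, aux_closed hg lP lG (fun k => hvg _), H,
      aux_closed hh lP lH (fun k => hvh _), fun q hqK hq0 => ?_⟩
    have l1 := aux_dot (lG.sub lH) (lP.const_sub q)
    have l2 : Tendsto (fun k => ∑ i, if P.1 i = 0 then 0 else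
        z (σ k) i * (q.1 i - (p (σ k)).1 i)) atTop (𝓝 (∑ i : Fin n, (0 : ℝ))) := by
      refine tendsto_finsetSum _ fun i _ => ?_
      by_cases hi : P.1 i = 0
      · simp [hi]
      · simp only [hi, if_false]
        have := (lz i hi).mul ((lPi i).const_sub (q.1 i))
        rwa [zero_mul] at this
    have l3 := l1.add l2
    rw [Finset.sum_const_zero, add_zero] at l3
    refine ge_of_tendsto' l3 fun k => (hq (σ k) q hqK).trans ?_
    refine add_le_add le_rfl (Finset.sum_le_sum fun i _ => ?_)
    by_cases hi : P.1 i = 0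
    · obtain ⟨μ, hμ, hzμ⟩ := hz (σ k) i
      have hθ0 : 0 < θ (σ k) := by
        have := hθ (σ k)
        have : (0 : ℝ) ≤ (σ k : ℝ) := Nat.cast_nonneg _
        linarith
      have := mul_nonneg hlam.le (h4 _ hθ0 _ _ hμ)
      rw [if_pos hi, hzμ, hq0 i hi]
      linarith
    · rw [if_neg hi]
  obtain ⟨k, hk⟩ := (lP.eventually (Metric.ball_mem_nhds _ hε)).exists
  refine hpn (σ k) (Set.mem_add.2 ⟨P, hPL, p (σ k) - P, ?_, by abel⟩)
  rw [mem_ball_zero_iff, ← dist_eq_norm]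
  exact hk
end

section
/- Suppose the family {r_θ}_{θ>0} satisfies Assumption 1 and there is a finite set S ⊆ ℝⁿ × ℝᵐ such that L_θ ∩ S ≠ ∅ for every θ > 0. Then there exists θ₀ ≥ 0 such that L_θ ∩ S ⊆ L for all θ ≥ θ₀. -/
open Filter Topology

theorem isCompact_subdiffE {n m : ℕ} (g : (Fin n → ℝ) × (Fin m → ℝ) → ℝ)
    (p : (Fin n → ℝ) × (Fin m → ℝ)) : IsCompact (subdiffE g p) := by
  have hcl : IsClosed (subdiffE g p) := by
    have : subdiffE g p = ⋂ q, {v | g p + dotE (q - p) v ≤ g q} := by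
      ext v; simp [subdiffE]
    rw [this]
    refine isClosed_iInter fun q => isClosed_le ?_ continuous_const
    unfold dotE
    fun_prop
  refine IsCompact.of_isClosed_subset (isCompact_Icc
    (a := ((fun i => g p - g (p - (Pi.single i 1, 0)), fun j => g p - g (p - (0, Pi.single j 1))) :
      (Fin n → ℝ) × (Fin m → ℝ)))
    (b := (fun i => g (p + (Pi.single i 1, 0)) - g p, fun j => g (p + (0, Pi.single j 1)) - g p)))
    hcl ?_
  intro v hv
  refine ⟨⟨fun i => ?_, fun j => ?_⟩, ⟨fun i => ?_, fun j => ?_⟩⟩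
  · have := hv (p - (Pi.single i 1, 0))
    simp [dotE, Pi.single_apply] at this
    simp; linarith
  · have := hv (p - (0, Pi.single j 1))
    simp [dotE, Pi.single_apply] at this
    simp; linarith
  · have := hv (p + (Pi.single i 1, 0))
    simp [dotE, Pi.single_apply] at this
    simp; linarith
  · have := hv (p + (0, Pi.single j 1))
    simp [dotE, Pi.single_apply] at this
    simp; linarith

/-- if a finite set `S` meets every `L_θ`, then for `θ` large enough
`L_θ ∩ S ⊆ L`. -/
theorem stmt_10 {n m : ℕ}
    (K : Set ((Fin n → ℝ) × (Fin m → ℝ))) (hK : Convex ℝ K)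
    (g h : (Fin n → ℝ) × (Fin m → ℝ) → ℝ)
    (hg : ConvexOn ℝ Set.univ g) (hh : ConvexOn ℝ Set.univ h)
    (f : (Fin n → ℝ) × (Fin m → ℝ) → ℝ) (hf : ∀ p, f p = g p - h p)
    (lam : ℝ) (hlam : 0 < lam)
    (r φ ψ : ℝ → ℝ → ℝ) (hA : Assumption1 r φ ψ)
    (L : Set ((Fin n → ℝ) × (Fin m → ℝ)))
    (hL : L = {p | p ∈ K ∧ ∃ vg ∈ subdiffE g p, ∃ vh ∈ subdiffE h p,
      ∀ q ∈ K, (∀ i, p.1 i = 0 → q.1 i = 0) → 0 ≤ dotE (vg - vh) (q - p)})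
    (Lθ : ℝ → Set ((Fin n → ℝ) × (Fin m → ℝ)))
    (hLθ : ∀ θ, Lθ θ = {p | p ∈ K ∧ ∃ vg ∈ subdiffE g p, ∃ vh ∈ subdiffE h p,
      ∃ zbar : Fin n → ℝ,
        (∀ i, ∃ μ ∈ rSubdiff (φ θ) (ψ θ) (p.1 i), zbar i = lam * μ) ∧
        ∀ q ∈ K, 0 ≤ dotE (vg - vh) (q - p) + ∑ i, zbar i * (q.1 i - p.1 i)})
    (S : Set ((Fin n → ℝ) × (Fin m → ℝ))) (hS : S.Finite)
    (hne : ∀ θ > (0 : ℝ), (Lθ θ ∩ S).Nonempty) :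
    ∃ θ₀ ≥ (0 : ℝ), ∀ θ ≥ θ₀, Lθ θ ∩ S ⊆ L := by
  have key : ∀ p ∈ S, ∀ᶠ θ in atTop, p ∈ Lθ θ → p ∈ L := by
    intro p _
    by_cases hpL : p ∈ L
    · exact Eventually.of_forall fun _ _ => hpL
    by_contra hcon
    apply hpL
    have hfr : ∀ k : ℕ, ∃ θ ≥ (k : ℝ), p ∈ Lθ θ := by
      intro k
      by_contra hk
      push Not at hk
      apply hcon
      filter_upwards [eventually_ge_atTop (k : ℝ)] with θ hθ hp
      exact absurd hp (hk θ hθ)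
    choose θ hθ hmem using hfr
    have hθt : Tendsto θ atTop atTop :=
      tendsto_atTop_mono hθ tendsto_natCast_atTop_atTop
    have hmem' := fun k => (hLθ (θ k)) ▸ hmem k
    simp only [Set.mem_ofPred_eq] at hmem'
    have hpK : p ∈ K := (hmem' 0).1
    choose vg hvg vh hvh z hz hineq using fun k => (hmem' k).2
    have hz0 : ∀ i, p.1 i ≠ 0 → Tendsto (fun k => z k i) atTop (𝓝 0) := by
      intro i hi
      rw [Metric.tendsto_atTop']
      intro ε hε
      obtain ⟨Θ, hΘ⟩ := hA.2.2.2.2.2 (p.1 i) (p.1 i) le_rfl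
        (by simp only [Set.Icc_self, Set.mem_singleton_iff]; exact fun h => hi h.symm)
        (ε / (2 * lam)) (by positivity)
      obtain ⟨N, hN⟩ := eventually_atTop.1 (hθt.eventually_ge_atTop Θ)
      refine ⟨N, fun k hk => ?_⟩
      obtain ⟨μ, hμ, hzμ⟩ := hz k i
      have h1 := hΘ (θ k) (hN k hk.le) (p.1 i) (by simp) μ hμ
      rw [Real.dist_eq, sub_zero, hzμ, abs_mul, abs_of_pos hlam]
      calc lam * |μ| ≤ lam * (ε / (2 * lam)) := by gcongr
        _ = ε / 2 := by field_simp
        _ < ε := by linarith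
    obtain ⟨⟨a, b⟩, hab, σ, hσ, hlim⟩ :=
      ((isCompact_subdiffE g p).prod (isCompact_subdiffE h p)).tendsto_subseq
        (x := fun k => (vg k, vh k)) (fun k => ⟨hvg k, hvh k⟩)
    rw [hL]
    refine ⟨hpK, a, hab.1, b, hab.2, fun q hq hq0 => ?_⟩
    have hc : Continuous fun w : ((Fin n → ℝ) × (Fin m → ℝ)) × ((Fin n → ℝ) × (Fin m → ℝ)) =>
        dotE (w.1 - w.2) (q - p) := by
      unfold dotE
      fun_prop
    have h1 : Tendsto (fun k => dotE (vg (σ k) - vh (σ k)) (q - p)) atTop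
        (𝓝 (dotE (a - b) (q - p))) := by
      have h0 := (hc.tendsto (a, b)).comp hlim
      simpa only [Function.comp_def] using h0
    have h2 : Tendsto (fun k => ∑ i, z (σ k) i * (q.1 i - p.1 i)) atTop (𝓝 0) := by
      have : Tendsto (fun k => ∑ i, z (σ k) i * (q.1 i - p.1 i)) atTop
          (𝓝 (∑ i : Fin n, (0 : ℝ))) := by
        refine tendsto_finsetSum _ fun i _ => ?_
        by_cases hi : p.1 i = 0
        · simp [hi, hq0 i hi]
        · simpa using ((hz0 i hi).comp hσ.tendsto_atTop).mul_const (q.1 i - p.1 i)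
      simpa using this
    have h3 := h1.add h2
    rw [add_zero] at h3
    exact ge_of_tendsto' h3 fun k => hineq (σ k) q hq
  obtain ⟨T, hT⟩ := eventually_atTop.1 ((Set.Finite.eventually_all hS).2 key)
  refine ⟨max T 0, le_max_right _ _, fun θ hθ p hp => ?_⟩
  exact hT θ ((le_max_left _ _).trans hθ) p hp.2 hp.1
end

section
/- Let τ ≥ λ and set θ = (τ + λ)/(λ M). Then the penalized problem and the capped-ℓ1 approximate problem with parameter θ are equivalent in the following sense: (x*,y*) is an optimal solution of the capped-ℓ1 approximate problem if and only if (x*,y*,u*) is an optimal solution of the penalized problem, where for each i, u*_i is chosen in {|x*_i|/M, 1} so that π(u*_i) = r_cap,θ(x*_i). Moreover the optimal values of the two problems are equal. -/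
/-- Proposition on Capped-ℓ1 vs. exact penalty: for `τ ≥ λ` and
`θ = (τ+λ)/(λM)`, the capped-ℓ1 approximate problem and the penalized problem are
equivalent, and their optimal values coincide. -/
theorem stmt_11 {n m : ℕ}
    (K : Set ((Fin n → ℝ) × (Fin m → ℝ))) (hK : Convex ℝ K)
    (g h : (Fin n → ℝ) × (Fin m → ℝ) → ℝ)
    (hg : ConvexOn ℝ Set.univ g) (hh : ConvexOn ℝ Set.univ h)
    (f : (Fin n → ℝ) × (Fin m → ℝ) → ℝ) (hf : ∀ p, f p = g p - h p)
    (lam τ : ℝ) (hlam : 0 < lam) (hτpos : 0 < τ) (hτ : lam ≤ τ)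
    (a b : Fin n → ℝ) (ha : ∀ i, a i ≤ 0) (hb : ∀ i, 0 < b i)
    (hKsub : K ⊆ {p | ∀ i, p.1 i ∈ Set.Icc (a i) (b i)})
    (M : ℝ) (hM : IsGreatest (Set.range fun i => max |a i| |b i|) M)
    (θ : ℝ) (hθ : θ = (τ + lam) / (lam * M))
    (π : ℝ → ℝ) (hπ : ∀ t, π t = t + (τ / lam) * min t (1 - t))
    (rcap : ℝ → ℝ) (hrcap : ∀ t, rcap t = min 1 (θ * |t|)) :
    (∀ p ∈ K, ∀ u : Fin n → ℝ,
      (∀ i, (u i = |p.1 i| / M ∨ u i = 1) ∧ π (u i) = rcap (p.1 i)) →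
      ((∀ q ∈ K, f p + lam * ∑ i, rcap (p.1 i) ≤ f q + lam * ∑ i, rcap (q.1 i))
        ↔
       ((∀ i, |p.1 i| / M ≤ u i ∧ u i ≤ 1) ∧
        ∀ q ∈ K, ∀ w : Fin n → ℝ, (∀ i, |q.1 i| / M ≤ w i ∧ w i ≤ 1) →
          f p + lam * ∑ i, π (u i) ≤ f q + lam * ∑ i, π (w i))))
    ∧ sInf ((fun p => f p + lam * ∑ i, rcap (p.1 i)) '' K)
      = sInf {v | ∃ p ∈ K, ∃ w : Fin n → ℝ,
          (∀ i, |p.1 i| / M ≤ w i ∧ w i ≤ 1) ∧ v = f p + lam * ∑ i, π (w i)} := by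
  have hMpos : 0 < M := by
    obtain ⟨⟨i, hi⟩, _⟩ := hM
    rw [← hi]
    exact lt_max_of_lt_right (abs_pos.mpr (hb i).ne')
  have hbd : ∀ p ∈ K, ∀ i, |p.1 i| / M ≤ 1 := by
    intro p hp i
    rw [div_le_one hMpos]
    have h1 : max |a i| |b i| ≤ M := hM.2 ⟨i, rfl⟩
    obtain ⟨h2, h3⟩ := hKsub hp i
    have h4 := le_max_left |a i| |b i|
    have h5 := le_max_right |a i| |b i|
    have h6 := neg_abs_le (a i)
    have h7 := le_abs_self (b i)
    exact abs_le.mpr ⟨by linarith, by linarith⟩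
  obtain ⟨s, hs⟩ : ∃ s, s = τ / lam := ⟨_, rfl⟩
  have hs1 : 1 ≤ s := by rw [hs, one_le_div hlam]; exact hτ
  have hr : ∀ t, rcap t = min 1 ((1 + s) * (|t| / M)) := by
    intro t
    rw [hrcap, hθ, hs]
    congr 1
    field_simp
    ring
  rw [← hs] at hπ
  have hle : ∀ x w, |x| / M ≤ w → w ≤ 1 → rcap x ≤ π w := by
    intro x w h1 h2
    rw [hr, hπ]
    rcases min_cases w (1 - w) with ⟨h3, _⟩ | ⟨h3, _⟩ <;> rw [h3]
    · refine (min_le_right _ _).trans ?_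
      nlinarith
    · refine (min_le_left _ _).trans ?_
      nlinarith
  have hex : ∀ x, |x| / M ≤ 1 → ∃ w, (|x| / M ≤ w ∧ w ≤ 1) ∧ π w = rcap x := by
    intro x hx
    have h0 : 0 ≤ |x| / M := by positivity
    rcases le_total 1 ((1 + s) * (|x| / M)) with h1 | h1
    · refine ⟨1, ⟨hx, le_rfl⟩, ?_⟩
      rw [hr, hπ, min_eq_left h1]
      norm_num
    · refine ⟨|x| / M, ⟨le_rfl, hx⟩, ?_⟩
      rw [hr, hπ, min_eq_right h1, min_eq_left (by nlinarith)]
      ring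
  have hle' : ∀ q : (Fin n → ℝ) × (Fin m → ℝ), ∀ w : Fin n → ℝ,
      (∀ i, |q.1 i| / M ≤ w i ∧ w i ≤ 1) →
      f q + lam * ∑ i, rcap (q.1 i) ≤ f q + lam * ∑ i, π (w i) := by
    intro q w hw
    have := Finset.sum_le_sum (s := Finset.univ)
      (fun i _ => hle (q.1 i) (w i) (hw i).1 (hw i).2)
    have := mul_le_mul_of_nonneg_left this hlam.le
    linarith
  have hex' : ∀ q ∈ K, ∃ w : Fin n → ℝ, (∀ i, |q.1 i| / M ≤ w i ∧ w i ≤ 1) ∧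
      ∑ i, π (w i) = ∑ i, rcap (q.1 i) := by
    intro q hq
    choose w hw1 hw2 using fun i => hex (q.1 i) (hbd q hq i)
    exact ⟨w, hw1, Finset.sum_congr rfl fun i _ => hw2 i⟩
  refine ⟨?_, ?_⟩
  · intro p hp u hu
    have hsum : ∑ i, π (u i) = ∑ i, rcap (p.1 i) :=
      Finset.sum_congr rfl fun i _ => (hu i).2
    rw [hsum]
    constructor
    · intro H
      refine ⟨fun i => ?_, fun q hq w hw => (H q hq).trans (hle' q w hw)⟩
      have := hbd p hp i
      rcases (hu i).1 with h1 | h1 <;> rw [h1]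
      · exact ⟨le_rfl, this⟩
      · exact ⟨this, le_rfl⟩
    · rintro ⟨_, H⟩ q hq
      obtain ⟨w, hw, hw2⟩ := hex' q hq
      rw [← hw2]
      exact H q hq w hw
  · apply csInf_eq_csInf_of_forall_exists_le
    · rintro _ ⟨p, hp, rfl⟩
      obtain ⟨w, hw, hw2⟩ := hex' p hp
      exact ⟨_, ⟨p, hp, w, hw, rfl⟩, by rw [hw2]⟩
    · rintro _ ⟨p, hp, w, hw, rfl⟩
      exact ⟨_, ⟨p, hp, rfl⟩, hle' p w hw⟩
end

section
/- Suppose K = Π_{i=1}^n [−l_i, l_i] × Y, where 0 ≤ l_i ≤ +∞ for each i and Y ⊆ ℝᵐ, and suppose κ > 0 satisfies |f(x,y) − f(x',y)| ≤ κ ‖x − x'‖₂ for all (x,y), (x',y) ∈ K with ‖x − x'‖₀ ≤ 1. Then for every θ > κ/λ, the ℓ0-problem and the capped-ℓ1 approximate problem with parameter θ are equivalent: (x*,y*) is an optimal solution of the ℓ0-problem if and only if it is an optimal solution of the capped-ℓ1 approximate problem. -/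
open scoped ENNReal

/-- Proposition on boxes: if `K = Π[-l_i,l_i] × Y` and `f` is
coordinatewise `κ`-Lipschitz in `x`, then for `θ > κ/λ` the ℓ0-problem and the
capped-ℓ1 approximate problem with parameter `θ` have the same optimal solutions. -/
theorem stmt_12 {n m : ℕ}
    (g h : (Fin n → ℝ) × (Fin m → ℝ) → ℝ)
    (hg : ConvexOn ℝ Set.univ g) (hh : ConvexOn ℝ Set.univ h)
    (f : (Fin n → ℝ) × (Fin m → ℝ) → ℝ) (hf : ∀ p, f p = g p - h p)
    (lam : ℝ) (hlam : 0 < lam)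
    (l : Fin n → ℝ≥0∞) (Y : Set (Fin m → ℝ))
    (K : Set ((Fin n → ℝ) × (Fin m → ℝ)))
    (hK : K = {p | (∀ i, ENNReal.ofReal |p.1 i| ≤ l i) ∧ p.2 ∈ Y})
    (κ : ℝ) (hκpos : 0 < κ)
    (hlip : ∀ p q : (Fin n → ℝ) × (Fin m → ℝ), p ∈ K → q ∈ K → p.2 = q.2 →
      (Finset.univ.filter fun i => p.1 i ≠ q.1 i).card ≤ 1 →
      |f p - f q| ≤ κ * Real.sqrt (∑ i, (p.1 i - q.1 i) ^ 2)) :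
    ∀ θ : ℝ, κ / lam < θ → ∀ p ∈ K,
      ((∀ q ∈ K, f p + lam * zeroNorm p.1 ≤ f q + lam * zeroNorm q.1)
        ↔
       (∀ q ∈ K, f p + lam * ∑ i, min 1 (θ * |p.1 i|)
          ≤ f q + lam * ∑ i, min 1 (θ * |q.1 i|))) := by
  intro θ hθ p hp
  have hθ0 : 0 < θ := lt_trans (div_pos hκpos hlam) hθ
  have hκθ : κ < θ * lam := (div_lt_iff₀ hlam).1 hθ
  have hZ : ∀ x : Fin n → ℝ, zeroNorm x = ∑ i, (if x i ≠ 0 then (1:ℝ) else 0) := by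
    intro x
    rw [Finset.sum_boole]
    rfl
  have hPZ : ∀ x : Fin n → ℝ, ∑ i, min 1 (θ * |x i|) ≤ zeroNorm x := by
    intro x
    rw [hZ]
    apply Finset.sum_le_sum
    intro i _
    by_cases hx : x i = 0
    · simp [hx]
    · simp [hx]
  have hPZ' : ∀ q : (Fin n → ℝ) × (Fin m → ℝ),
      f q + lam * ∑ i, min 1 (θ * |q.1 i|) ≤ f q + lam * zeroNorm q.1 := by
    intro q
    have := mul_le_mul_of_nonneg_left (hPZ q.1) hlam.le
    linarith
  have step : ∀ q ∈ K, ∀ i, q.1 i ≠ 0 → θ * |q.1 i| < 1 →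
      ∃ q' ∈ K, (Finset.univ.filter fun i => q'.1 i ≠ 0).card
          < (Finset.univ.filter fun i => q.1 i ≠ 0).card ∧
        f q' + lam * ∑ i, min 1 (θ * |q'.1 i|) < f q + lam * ∑ i, min 1 (θ * |q.1 i|) := by
    intro q hq i hi hlt
    have hq' : (Function.update q.1 i 0, q.2) ∈ K := by
      rw [hK] at hq ⊢
      refine ⟨fun j => ?_, hq.2⟩
      by_cases hj : j = i
      · subst hj
        simp
      · simpa [hj] using hq.1 j
    refine ⟨(Function.update q.1 i 0, q.2), hq', ?_, ?_⟩
    · apply Finset.card_lt_card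
      rw [Finset.ssubset_iff_of_subset]
      · exact ⟨i, by simp [hi], by simp⟩
      · intro j
        by_cases hj : j = i
        · subst hj
          simp
        · simp [hj]
    · have hL := hlip _ _ hq' hq rfl (by
        rw [Finset.card_le_one]
        have key : ∀ a, Function.update q.1 i 0 a ≠ q.1 a → a = i := by
          intro a ha
          by_contra hai
          exact ha (by simp [hai])
        intro a ha b hb
        rw [key a (by simpa using ha), key b (by simpa using hb)])
      have e1 : ∑ j, (Function.update q.1 i 0 j - q.1 j) ^ 2 = (q.1 i) ^ 2 := by
        rw [Finset.sum_eq_single i]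
        · simp
        · intro b _ hb
          simp [hb]
        · simp
      have e2 : ∑ j, min 1 (θ * |q.1 j|) - ∑ j, min 1 (θ * |Function.update q.1 i 0 j|)
          = θ * |q.1 i| := by
        rw [← Finset.sum_sub_distrib, Finset.sum_eq_single i]
        · simp [hlt.le]
        · intro b _ hb
          simp [hb]
        · simp
      simp only at hL ⊢
      rw [e1, Real.sqrt_sq_eq_abs] at hL
      have h1 := (abs_le.1 hL).2
      have h2 : κ * |q.1 i| < θ * lam * |q.1 i| :=
        mul_lt_mul_of_pos_right hκθ (abs_pos.2 hi)
      have h3 : ∑ j, min 1 (θ * |q.1 j|)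
          = ∑ j, min 1 (θ * |Function.update q.1 i 0 j|) + θ * |q.1 i| := by linarith
      rw [h3]
      nlinarith
  have main : ∀ N : ℕ, ∀ q ∈ K, (Finset.univ.filter fun i => q.1 i ≠ 0).card = N →
      ∃ q' ∈ K, f q' + lam * zeroNorm q'.1 ≤ f q + lam * ∑ i, min 1 (θ * |q.1 i|) ∧
        (zeroNorm q.1 = ∑ i, min 1 (θ * |q.1 i|) ∨
          f q' + lam * zeroNorm q'.1 < f q + lam * ∑ i, min 1 (θ * |q.1 i|)) := by
    intro N
    induction N using Nat.strong_induction_on with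
    | _ N ih =>
      intro q hq hN
      by_cases hex : ∃ i, q.1 i ≠ 0 ∧ θ * |q.1 i| < 1
      · obtain ⟨i, hi, hlt⟩ := hex
        obtain ⟨q', hq', hc, hs⟩ := step q hq i hi hlt
        obtain ⟨q'', hq'', h1, _⟩ := ih _ (hN ▸ hc) q' hq' rfl
        exact ⟨q'', hq'', (h1.trans_lt hs).le, Or.inr (h1.trans_lt hs)⟩
      · push Not at hex
        have e : zeroNorm q.1 = ∑ i, min 1 (θ * |q.1 i|) := by
          rw [hZ]
          apply Finset.sum_congr rfl
          intro i _
          by_cases hx : q.1 i = 0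
          · simp [hx]
          · simp [hx, hex i hx]
        exact ⟨q, hq, by rw [e], Or.inl e⟩
  constructor
  · intro H q hq
    obtain ⟨q', hq', h1, _⟩ := main _ q hq rfl
    exact (hPZ' p).trans ((H q' hq').trans h1)
  · intro H q hq
    obtain ⟨q', hq', _, h2⟩ := main _ p hp rfl
    rcases h2 with h2 | h2
    · rw [h2]
      exact (H q hq).trans (hPZ' q)
    · exact absurd ((H q' hq').trans (hPZ' q')) (not_le.2 h2)
end

section
/- Let θ > 0 and suppose the ℓ0-problem and the capped-ℓ1 approximate problem with parameter θ have the same set of optimal solutions, and that for some common optimal solution (x*,y*) one has Σ_{i=1}^n r_cap,θ(x*_i) = ‖x*‖₀. Let σ : ℝ → ℝ satisfy r_cap,θ(t) ≤ σ(t) ≤ s(t) for all t ∈ ℝ, where s(t) = 1 for t ≠ 0 and s(0) = 0. Then the problem: minimize f(x,y) + λ Σ_{i=1}^n σ(x_i) over (x,y) ∈ K, is equivalent to the ℓ0-problem: the two problems have the same set of optimal solutions and the same optimal value. -/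
/-- Proposition, extension to other approximations: if the ℓ0-problem
and the capped-ℓ1 problem with parameter `θ` are equivalent (with equal approximation
value at some common solution), then any `σ` squeezed between `r_cap,θ` and the step
function also yields a problem equivalent to the ℓ0-problem. -/
theorem stmt_13 {n m : ℕ}
    (K : Set ((Fin n → ℝ) × (Fin m → ℝ))) (hK : Convex ℝ K)
    (g h : (Fin n → ℝ) × (Fin m → ℝ) → ℝ)
    (hg : ConvexOn ℝ Set.univ g) (hh : ConvexOn ℝ Set.univ h)
    (f : (Fin n → ℝ) × (Fin m → ℝ) → ℝ) (hf : ∀ p, f p = g p - h p)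
    (lam : ℝ) (hlam : 0 < lam)
    (θ : ℝ) (hθ : 0 < θ)
    (σ : ℝ → ℝ) (hσ : ∀ t, min 1 (θ * |t|) ≤ σ t ∧ σ t ≤ stepFn t)
    (hsame :
      {p | p ∈ K ∧ ∀ q ∈ K, f p + lam * zeroNorm p.1 ≤ f q + lam * zeroNorm q.1}
      = {p | p ∈ K ∧ ∀ q ∈ K, f p + lam * ∑ i, min 1 (θ * |p.1 i|)
          ≤ f q + lam * ∑ i, min 1 (θ * |q.1 i|)})
    (hcommon : ∃ pstar, (pstar ∈ K ∧ ∀ q ∈ K,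
        f pstar + lam * zeroNorm pstar.1 ≤ f q + lam * zeroNorm q.1) ∧
      (∑ i, min 1 (θ * |pstar.1 i|)) = zeroNorm pstar.1) :
    ({p | p ∈ K ∧ ∀ q ∈ K, f p + lam * ∑ i, σ (p.1 i) ≤ f q + lam * ∑ i, σ (q.1 i)}
      = {p | p ∈ K ∧ ∀ q ∈ K,
          f p + lam * zeroNorm p.1 ≤ f q + lam * zeroNorm q.1})
    ∧ sInf ((fun p => f p + lam * ∑ i, σ (p.1 i)) '' K)
      = sInf ((fun p => f p + lam * zeroNorm p.1) '' K) := by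
  have hA : ∀ p : (Fin n → ℝ) × (Fin m → ℝ),
      f p + lam * ∑ i, min 1 (θ * |p.1 i|) ≤ f p + lam * ∑ i, σ (p.1 i) := by
    intro p
    have : ∑ i, min 1 (θ * |p.1 i|) ≤ ∑ i, σ (p.1 i) :=
      Finset.sum_le_sum fun i _ => (hσ _).1
    have := mul_le_mul_of_nonneg_left this hlam.le
    linarith
  have hZ : ∀ p : (Fin n → ℝ) × (Fin m → ℝ),
      f p + lam * ∑ i, σ (p.1 i) ≤ f p + lam * zeroNorm p.1 := by
    intro p
    have h1 : ∑ i, σ (p.1 i) ≤ ∑ i, stepFn (p.1 i) :=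
      Finset.sum_le_sum fun i _ => (hσ _).2
    have h2 : ∑ i, stepFn (p.1 i) = zeroNorm p.1 := by
      unfold zeroNorm stepFn
      rw [Finset.card_filter]
      push_cast
      refine Finset.sum_congr rfl fun i _ => ?_
      by_cases h0 : p.1 i = 0 <;> simp [h0]
    rw [h2] at h1
    have := mul_le_mul_of_nonneg_left h1 hlam.le
    linarith
  obtain ⟨w, ⟨hwK, hw⟩, hwe⟩ := hcommon
  have hwA := (Set.ext_iff.1 hsame w).1 ⟨hwK, hw⟩
  have hwA2 : ∀ q ∈ K, f w + lam * zeroNorm w.1 ≤ f q + lam * ∑ i, min 1 (θ * |q.1 i|) := by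
    intro q hq
    rw [← hwe]
    exact hwA.2 q hq
  refine ⟨?_, ?_⟩
  · ext p
    constructor
    · rintro ⟨hp, hpo⟩
      refine (Set.ext_iff.1 hsame p).2 ⟨hp, fun q hq => ?_⟩
      linarith [hA p, hpo w hwK, hZ w, hwA2 q hq]
    · rintro ⟨hp, hpo⟩
      refine ⟨hp, fun q hq => ?_⟩
      linarith [hZ p, hpo w hwK, hwA2 q hq, hA q]
  · have e1 : IsLeast ((fun p => f p + lam * ∑ i, σ (p.1 i)) '' K)
        (f w + lam * zeroNorm w.1) := by
      refine ⟨⟨w, hwK, le_antisymm (hZ w) ((hwA2 w hwK).trans (hA w))⟩, ?_⟩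
      rintro _ ⟨q, hq, rfl⟩
      exact (hwA2 q hq).trans (hA q)
    have e2 : IsLeast ((fun p => f p + lam * zeroNorm p.1) '' K)
        (f w + lam * zeroNorm w.1) := by
      refine ⟨⟨w, hwK, rfl⟩, ?_⟩
      rintro _ ⟨q, hq, rfl⟩
      exact hw q hq
    rw [e1.csInf_eq, e2.csInf_eq]
end

section
/- Let a > 1 and θ > 0, and set θ' = θ/a. Suppose the ℓ0-problem and the capped-ℓ1 approximate problem with parameter θ' have the same set of optimal solutions, and that for some common optimal solution (x*,y*) one has Σ_{i=1}^n r_cap,θ'(x*_i) = ‖x*‖₀. Then the SCAD approximate problem: minimize f(x,y) + λ Σ_{i=1}^n r_scad(x_i) over (x,y) ∈ K, where r_scad is the SCAD function with parameters a and θ, has the same set of optimal solutions as the ℓ0-problem. -/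
/-- The SCAD approximation function with parameters `a > 1` and `θ > 0`. -/
noncomputable def rscad (a θ t : ℝ) : ℝ :=
  if |t| ≤ 1 / θ then (2 * θ / (a + 1)) * |t|
  else if |t| < a / θ then (-(θ ^ 2) * t ^ 2 + 2 * a * θ * |t| - 1) / (a ^ 2 - 1)
  else 1

lemma aux_low (a θ t : ℝ) (ha : 1 < a) (hθ : 0 < θ) :
    min 1 (θ / a * |t|) ≤ rscad a θ t := by
  have ht := abs_nonneg t
  unfold rscad
  split_ifs with h1 h2
  · refine (min_le_right _ _).trans ?_
    apply mul_le_mul_of_nonneg_right _ ht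
    rw [div_le_div_iff₀ (by linarith) (by linarith)]
    nlinarith
  · refine (min_le_right _ _).trans ?_
    have h1' : 1 < |t| * θ := by
      rw [← div_lt_iff₀ hθ]; exact not_le.mp h1
    have h2' : |t| * θ < a := by rwa [← lt_div_iff₀ hθ]
    rw [← sq_abs t, div_mul_eq_mul_div, div_le_div_iff₀ (by linarith) (by nlinarith)]
    have : 0 ≤ (a - |t| * θ) * (a * (|t| * θ) - 1) :=
      mul_nonneg (by linarith) (by nlinarith)
    nlinarith
  · exact min_le_left _ _

lemma aux_up (a θ t : ℝ) (ha : 1 < a) (hθ : 0 < θ) :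
    rscad a θ t ≤ if t ≠ 0 then 1 else 0 := by
  by_cases h0 : t = 0
  · subst h0
    simp [rscad, hθ.le]
  rw [if_pos h0]
  unfold rscad
  split_ifs with h1 h2
  · have h1' : |t| * θ ≤ 1 := by rwa [← le_div_iff₀ hθ]
    rw [div_mul_eq_mul_div, div_le_one (by linarith)]
    nlinarith
  · rw [← sq_abs t, div_le_one (by nlinarith)]
    nlinarith [sq_nonneg (a - |t| * θ)]
  · exact le_rfl

lemma aux_zn {n : ℕ} (x : Fin n → ℝ) :
    zeroNorm x = ∑ i, if x i ≠ 0 then (1 : ℝ) else 0 := by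
  rw [zeroNorm, Finset.sum_boole]

/-- if the ℓ0-problem and the capped-ℓ1 problem with parameter
`θ' = θ/a` are equivalent (with equal approximation value at some common solution),
then the SCAD approximate problem with parameters `a, θ` has the same set of optimal
solutions as the ℓ0-problem. -/
theorem stmt_14 {n m : ℕ}
    (K : Set ((Fin n → ℝ) × (Fin m → ℝ))) (hK : Convex ℝ K)
    (g h : (Fin n → ℝ) × (Fin m → ℝ) → ℝ)
    (hg : ConvexOn ℝ Set.univ g) (hh : ConvexOn ℝ Set.univ h)
    (f : (Fin n → ℝ) × (Fin m → ℝ) → ℝ) (hf : ∀ p, f p = g p - h p)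
    (lam : ℝ) (hlam : 0 < lam)
    (a θ : ℝ) (ha : 1 < a) (hθ : 0 < θ)
    (θ' : ℝ) (hθ' : θ' = θ / a)
    (hsame :
      {p | p ∈ K ∧ ∀ q ∈ K, f p + lam * zeroNorm p.1 ≤ f q + lam * zeroNorm q.1}
      = {p | p ∈ K ∧ ∀ q ∈ K, f p + lam * ∑ i, min 1 (θ' * |p.1 i|)
          ≤ f q + lam * ∑ i, min 1 (θ' * |q.1 i|)})
    (hcommon : ∃ pstar, (pstar ∈ K ∧ ∀ q ∈ K,
        f pstar + lam * zeroNorm pstar.1 ≤ f q + lam * zeroNorm q.1) ∧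
      (∑ i, min 1 (θ' * |pstar.1 i|)) = zeroNorm pstar.1) :
    {p | p ∈ K ∧ ∀ q ∈ K,
        f p + lam * ∑ i, rscad a θ (p.1 i) ≤ f q + lam * ∑ i, rscad a θ (q.1 i)}
      = {p | p ∈ K ∧ ∀ q ∈ K,
          f p + lam * zeroNorm p.1 ≤ f q + lam * zeroNorm q.1} := by
  have low : ∀ x : Fin n → ℝ, lam * ∑ i, min 1 (θ' * |x i|) ≤ lam * ∑ i, rscad a θ (x i) := by
    intro x
    subst hθ'
    exact mul_le_mul_of_nonneg_left
      (Finset.sum_le_sum fun i _ => aux_low a θ (x i) ha hθ) hlam.le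
  have up : ∀ x : Fin n → ℝ, lam * ∑ i, rscad a θ (x i) ≤ lam * zeroNorm x := by
    intro x
    rw [aux_zn]
    exact mul_le_mul_of_nonneg_left
      (Finset.sum_le_sum fun i _ => aux_up a θ (x i) ha hθ) hlam.le
  obtain ⟨ps, hps, heq⟩ := hcommon
  have hcap := (Set.ext_iff.mp hsame ps).mp hps
  have hcap2 := hcap.2
  rw [heq] at hcap2
  ext p
  constructor
  · rintro ⟨hpK, hp⟩
    refine (Set.ext_iff.mp hsame p).mpr ⟨hpK, fun q hq => ?_⟩
    linarith [low p.1, hp ps hps.1, up ps.1, hcap2 q hq]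
  · rintro ⟨hpK, hp⟩
    refine ⟨hpK, fun q hq => ?_⟩
    linarith [up p.1, hp ps hps.1, hcap2 q hq, low q.1]
end

section
/- Let β > 0, a > 1, and p < 0. Define, for t ∈ ℝ: r_exp(t) = 1 − e^{−β|t|}; r_{ℓp⁻}(t) = 1 − (1 + (−β/p)|t|)^p; r_cap(t) = min{1, β|t|}; and r_scad(t) the SCAD function with parameters a and θ_scad = β(a+1)/2 (so that the right derivatives at 0 of all four functions equal β). Then for every t ∈ ℝ: 0 ≤ r_{ℓp⁻}(t) ≤ r_exp(t) ≤ r_scad(t) ≤ r_cap(t) ≤ s(t), where s(t) = 1 for t ≠ 0 and s(0) = 0. -/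
/-- comparison of the usual approximations calibrated to have the same
right derivative `β` at `0`:
`0 ≤ r_{ℓp⁻} ≤ r_exp ≤ r_scad ≤ r_cap ≤ s`. -/
theorem stmt_15 (β a p : ℝ) (hβ : 0 < β) (ha : 1 < a) (hp : p < 0) :
    ∀ t : ℝ,
      0 ≤ 1 - (1 + (-β / p) * |t|) ^ p ∧
      1 - (1 + (-β / p) * |t|) ^ p ≤ 1 - Real.exp (-β * |t|) ∧
      1 - Real.exp (-β * |t|) ≤ rscad a (β * (a + 1) / 2) t ∧
      rscad a (β * (a + 1) / 2) t ≤ min 1 (β * |t|) ∧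
      min 1 (β * |t|) ≤ stepFn t := by
  intro t
  have ht : 0 ≤ |t| := abs_nonneg t
  have hsq : t ^ 2 = |t| ^ 2 := (sq_abs t).symm
  have hy : 0 ≤ (-β / p) * |t| :=
    mul_nonneg (div_nonneg_of_nonpos (by linarith) hp.le) ht
  have hθ : 0 < β * (a + 1) / 2 := by nlinarith [mul_pos hβ (by linarith : 0 < a + 1)]
  have ha1 : 0 < a + 1 := by linarith
  have ha2 : 0 < a - 1 := by linarith
  have ha3 : 0 < a ^ 2 - 1 := by nlinarith
  have hx : 0 ≤ β * |t| := mul_nonneg hβ.le ht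
  refine ⟨?_, ?_, ?_, ?_, ?_⟩
  · have := Real.rpow_le_one_of_one_le_of_nonpos (x := 1 + (-β / p) * |t|) (z := p)
      (by linarith) hp.le
    linarith
  · have h1 : 1 + (-β / p) * |t| ≤ Real.exp ((-β / p) * |t|) := by
      linarith [Real.add_one_le_exp ((-β / p) * |t|)]
    have h2 := Real.rpow_le_rpow_of_nonpos (by linarith) h1 hp.le
    rw [← Real.exp_mul] at h2
    have h3 : (-β / p) * |t| * p = -β * |t| := by
      have := hp.ne
      field_simp
    rw [h3] at h2
    linarith
  · unfold rscad
    split_ifs with h1 h2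
    · have h3 : 2 * (β * (a + 1) / 2) / (a + 1) * |t| = β * |t| := by field_simp
      rw [h3]
      linarith [Real.add_one_le_exp (-β * |t|)]
    · rw [not_le, div_lt_iff₀ hθ] at h1
      rw [lt_div_iff₀ hθ] at h2
      rw [hsq]
      obtain ⟨u, hu⟩ : ∃ u, u = |t| * (β * (a + 1) / 2) := ⟨_, rfl⟩
      rw [← hu] at h1 h2
      have e1 : -β * |t| = -(2 * u / (a + 1)) := by rw [hu]; field_simp
      have e2 : (-((β * (a + 1) / 2) ^ 2) * |t| ^ 2 + 2 * a * (β * (a + 1) / 2) * |t| - 1)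
          / (a ^ 2 - 1) = 1 - ((a - 1) / (a + 1)) * ((a - u) / (a - 1)) ^ 2 := by
        have e3 : -((β * (a + 1) / 2) ^ 2) * |t| ^ 2 + 2 * a * (β * (a + 1) / 2) * |t| - 1
          = (a ^ 2 - 1) - (a - u) ^ 2 := by rw [hu]; ring
        have e4 : a ^ 2 - 1 = (a - 1) * (a + 1) := by ring
        rw [e3, e4]
        field_simp
      rw [e1, e2]
      have k1 : (a - 1) / (a + 1) ≤ Real.exp (-(2 / (a + 1))) := by
        have e : (a - 1) / (a + 1) = -(2 / (a + 1)) + 1 := by field_simp; ring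
        rw [e]; exact Real.add_one_le_exp _
      have k2 : (a - u) / (a - 1) ≤ Real.exp (-((u - 1) / (a - 1))) := by
        have e : (a - u) / (a - 1) = -((u - 1) / (a - 1)) + 1 := by field_simp; ring
        rw [e]; exact Real.add_one_le_exp _
      have k3 : Real.exp (-((u - 1) / (a - 1))) ≤ Real.exp (-((u - 1) / (a + 1))) := by
        apply Real.exp_le_exp.2
        apply neg_le_neg
        apply div_le_div_of_nonneg_left <;> linarith
      have k0 : 0 ≤ (a - u) / (a - 1) := div_nonneg (by linarith) ha2.le
      have k4 := mul_le_mul k1 (pow_le_pow_left₀ k0 (k2.trans k3) 2) (sq_nonneg _)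
        (Real.exp_pos _).le
      rw [← Real.exp_nat_mul, ← Real.exp_add] at k4
      have e5 : -(2 / (a + 1)) + ((2 : ℕ) : ℝ) * -((u - 1) / (a + 1)) = -(2 * u / (a + 1)) := by
        push_cast; field_simp; ring
      rw [e5] at k4
      linarith
    · linarith [Real.exp_pos (-β * |t|)]
  · unfold rscad
    split_ifs with h1 h2
    · have h3 : 2 * (β * (a + 1) / 2) / (a + 1) * |t| = β * |t| := by field_simp
      rw [h3]
      rw [le_div_iff₀ hθ] at h1
      exact le_min (by nlinarith) le_rfl
    · rw [hsq]
      apply le_min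
      · rw [div_le_one ha3]
        nlinarith [sq_nonneg (a - |t| * (β * (a + 1) / 2))]
      · rw [div_le_iff₀ ha3]
        nlinarith [sq_nonneg (|t| * (β * (a + 1) / 2) - 1)]
    · rw [not_lt, div_le_iff₀ hθ] at h2
      apply le_min le_rfl
      by_contra hc
      nlinarith
  · unfold stepFn
    split_ifs with h
    · simp [h]
    · exact min_le_left _ _
end

section
/- Let a > 1 and θ_scad, θ_cap > 0. Let r_scad be the SCAD function with parameters a and θ_scad, and r_cap(t) = min{1, θ_cap|t|}. Then: (1) if 2θ_scad/(a+1) ≤ θ_cap, then 0 ≤ r_scad(t) ≤ r_cap(t) ≤ s(t) for all t ∈ ℝ; (2) if θ_cap ≤ θ_scad/a, then 0 ≤ r_cap(t) ≤ r_scad(t) ≤ s(t) for all t ∈ ℝ; here s(t) = 1 for t ≠ 0 and s(0) = 0. -/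
theorem rscad_bounds (a θ t : ℝ) (ha : 1 < a) (hθ : 0 < θ) :
    min 1 (θ / a * |t|) ≤ rscad a θ t ∧ rscad a θ t ≤ 1 ∧
      rscad a θ t ≤ 2 * θ / (a + 1) * |t| := by
  have ht : 0 ≤ |t| := abs_nonneg t
  have hu : 0 ≤ θ * |t| := by positivity
  have e1 : θ / a * |t| = (θ * |t|) / a := by ring
  have e2 : 2 * θ / (a + 1) * |t| = (2 * (θ * |t|)) / (a + 1) := by ring
  have e3 : -(θ ^ 2) * t ^ 2 + 2 * a * θ * |t| - 1
      = -(θ * |t|) ^ 2 + 2 * a * (θ * |t|) - 1 := by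
    rw [mul_pow, sq_abs]; ring
  have c1 : |t| ≤ 1 / θ ↔ θ * |t| ≤ 1 := by rw [le_div_iff₀ hθ, mul_comm]
  have c2 : |t| < a / θ ↔ θ * |t| < a := by rw [lt_div_iff₀ hθ, mul_comm]
  unfold rscad
  rw [e1, e2, e3]
  simp only [c1, c2]
  generalize θ * |t| = u at *
  have a0 : 0 < a := by linarith
  have a1 : 0 < a + 1 := by linarith
  have a2 : 0 < a ^ 2 - 1 := by nlinarith
  split_ifs with h1 h2
  · refine ⟨(min_le_right _ _).trans ?_, ?_, le_refl _⟩
    · rw [div_le_div_iff₀ a0 a1]; nlinarith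
    · rw [div_le_one a1]; linarith
  · push Not at h1
    refine ⟨(min_le_right _ _).trans ?_, ?_, ?_⟩
    · rw [div_le_div_iff₀ a0 a2]
      have : 0 ≤ (a - u) * (a * u - 1) := mul_nonneg (by linarith) (by nlinarith)
      nlinarith
    · rw [div_le_one a2]; nlinarith [sq_nonneg (a - u)]
    · rw [div_le_div_iff₀ a2 a1]
      have : 0 ≤ (a + 1) * (u - 1) ^ 2 := by positivity
      nlinarith
  · push Not at h2
    refine ⟨min_le_left _ _, le_refl _, ?_⟩
    rw [le_div_iff₀ a1]; linarith

/-- comparison of SCAD and Capped-ℓ1 for different parameter values. -/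
theorem stmt_16 (a θs θc : ℝ) (ha : 1 < a) (hθs : 0 < θs) (hθc : 0 < θc) :
    ((2 * θs / (a + 1) ≤ θc) → ∀ t : ℝ,
      0 ≤ rscad a θs t ∧ rscad a θs t ≤ min 1 (θc * |t|) ∧
      min 1 (θc * |t|) ≤ stepFn t)
    ∧ ((θc ≤ θs / a) → ∀ t : ℝ,
      0 ≤ min 1 (θc * |t|) ∧ min 1 (θc * |t|) ≤ rscad a θs t ∧
      rscad a θs t ≤ stepFn t) := by
  constructor
  · intro h t
    obtain ⟨h1, h2, h3⟩ := rscad_bounds a θs t ha hθs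
    have a0 : 0 < a := by linarith
    refine ⟨le_trans (le_min zero_le_one (by positivity)) h1, le_min h2 (h3.trans ?_), ?_⟩
    · exact mul_le_mul_of_nonneg_right h (abs_nonneg t)
    · unfold stepFn
      split_ifs with h0
      · simp [h0]
      · exact min_le_left _ _
  · intro h t
    obtain ⟨h1, h2, h3⟩ := rscad_bounds a θs t ha hθs
    refine ⟨le_min zero_le_one (by positivity), le_trans (min_le_min_left _ ?_) h1, ?_⟩
    · exact mul_le_mul_of_nonneg_right h (abs_nonneg t)
    · unfold stepFn
      split_ifs with h0
      · simpa [h0] using h3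
      · exact h2
end

section
/- Let r : ℝ → ℝ be concave on [0,+∞) and suppose its right derivative at 0, r'(0) = lim_{t→0⁺} (r(t) − r(0))/t, exists and is finite. Then for every η ≥ r'(0), the function ψ(t) = η|t| − r(|t|) is convex on ℝ. -/
open Filter Topology

/-- Proposition: if `r` is concave on `[0,∞)` with finite right
derivative `d = r'(0)` at `0`, then for every `η ≥ d` the function
`ψ(t) = η|t| - r(|t|)` is convex on `ℝ`. -/
theorem stmt_17 (r : ℝ → ℝ)
    (hconc : ConcaveOn ℝ (Set.Ici 0) r)
    (d : ℝ)
    (hd : Tendsto (fun t => (r t - r 0) / t) (nhdsWithin 0 (Set.Ioi 0)) (nhds d))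
    (η : ℝ) (hη : d ≤ η) :
    ConvexOn ℝ Set.univ (fun t => η * |t| - r |t|) := by
  have h0 : ∀ t : ℝ, 0 < t → r t - r 0 ≤ η * t := by
    intro t ht
    have h1 : (r t - r 0) / t ≤ d := by
      refine ge_of_tendsto hd ?_
      filter_upwards [Ioo_mem_nhdsGT ht] with s hs
      obtain ⟨hs0, hst⟩ := hs
      have hle : s / t ≤ 1 := (div_le_one ht).2 hst.le
      have h := hconc.2 (Set.mem_Ici.2 ht.le) (Set.mem_Ici.2 le_rfl)
        (div_nonneg hs0.le ht.le) (sub_nonneg.2 hle) (by ring)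
      simp only [smul_eq_mul, mul_zero, add_zero] at h
      rw [div_mul_cancel₀ _ ht.ne'] at h
      rw [le_div_iff₀ hs0]
      have e : (r t - r 0) / t * s = s / t * r t + (1 - s / t) * r 0 - r 0 := by
        field_simp
        ring
      linarith
    rw [div_le_iff₀ ht] at h1
    nlinarith
  have hmono : ∀ s t : ℝ, 0 ≤ s → s ≤ t → η * s - r s ≤ η * t - r t := by
    intro s t hs hst
    rcases hs.eq_or_lt with rfl | hs0
    · rcases hst.eq_or_lt with rfl | ht
      · exact le_rfl
      · have := h0 t ht
        linarith
    have ht : 0 < t := hs0.trans_le hst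
    have hle : 0 ≤ 1 - s / t := sub_nonneg.2 ((div_le_one ht).2 hst)
    have h := hconc.2 (Set.mem_Ici.2 ht.le) (Set.mem_Ici.2 le_rfl)
      (div_nonneg hs0.le ht.le) hle (by ring)
    simp only [smul_eq_mul, mul_zero, add_zero] at h
    rw [div_mul_cancel₀ _ ht.ne'] at h
    have h2 := mul_le_mul_of_nonneg_left (h0 t ht) hle
    have e : (1 - s / t) * (η * t) = η * t - η * s := by
      field_simp
    linarith
  refine ⟨convex_univ, ?_⟩
  intro x _ y _ a b ha hb hab
  have h1 : |a * x + b * y| ≤ a * |x| + b * |y| := by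
    have := abs_add_le (a * x) (b * y)
    rwa [abs_mul, abs_mul, abs_of_nonneg ha, abs_of_nonneg hb] at this
  have h2 := hmono _ _ (abs_nonneg _) h1
  have h3 := hconc.2 (Set.mem_Ici.2 (abs_nonneg x)) (Set.mem_Ici.2 (abs_nonneg y)) ha hb hab
  simp only [smul_eq_mul] at h3 ⊢
  linarith
end

section
/- Suppose K = Π_{i=1}^n [−l_i, l_i] × Y with 0 ≤ l_i ≤ +∞ for each i and Y ⊆ ℝᵐ, and suppose κ > 0 satisfies |f(x,y) − f(x',y)| ≤ κ ‖x − x'‖₂ for all (x,y), (x',y) ∈ K with ‖x − x'‖₀ ≤ 1. Let θ > κ/λ and define Φ(x) = Σ_{i=1}^n min{1, θ|x_i|}. For x ∈ ℝⁿ, define t^x ∈ ℝⁿ by t^x_i = 0 if |x_i| < 1/θ and t^x_i = x_i otherwise. Then for every (x,y) ∈ K one has (t^x, y) ∈ K and f(x,y) + λΦ(x) ≥ f(t^x,y) + λΦ(t^x), with equality if and only if |x_i| ≥ 1/θ for every index i with x_i ≠ 0. -/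
open scoped ENNReal

/-- truncation decreases the capped-ℓ1 penalized objective. For
`K = Π[-l_i,l_i] × Y`, `f` coordinatewise `κ`-Lipschitz in `x`, `θ > κ/λ`,
`Φ(x) = Σ min{1, θ|x_i|}` and `t^x` the truncation of `x` at level `1/θ`, one has
`(t^x,y) ∈ K`, `f(x,y) + λΦ(x) ≥ f(t^x,y) + λΦ(t^x)`, with equality iff
`|x_i| ≥ 1/θ` for every `i` in the support of `x`. -/
theorem stmt_19 {n m : ℕ}
    (g h : (Fin n → ℝ) × (Fin m → ℝ) → ℝ)
    (hg : ConvexOn ℝ Set.univ g) (hh : ConvexOn ℝ Set.univ h)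
    (f : (Fin n → ℝ) × (Fin m → ℝ) → ℝ) (hf : ∀ p, f p = g p - h p)
    (lam : ℝ) (hlam : 0 < lam)
    (l : Fin n → ℝ≥0∞) (Y : Set (Fin m → ℝ))
    (K : Set ((Fin n → ℝ) × (Fin m → ℝ)))
    (hK : K = {p | (∀ i, ENNReal.ofReal |p.1 i| ≤ l i) ∧ p.2 ∈ Y})
    (κ : ℝ) (hκpos : 0 < κ)
    (hlip : ∀ p q : (Fin n → ℝ) × (Fin m → ℝ), p ∈ K → q ∈ K → p.2 = q.2 →
      (Finset.univ.filter fun i => p.1 i ≠ q.1 i).card ≤ 1 →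
      |f p - f q| ≤ κ * Real.sqrt (∑ i, (p.1 i - q.1 i) ^ 2))
    (θ : ℝ) (hθ : κ / lam < θ)
    (Φ : (Fin n → ℝ) → ℝ) (hΦ : ∀ x, Φ x = ∑ i, min 1 (θ * |x i|))
    (T : (Fin n → ℝ) → (Fin n → ℝ))
    (hT : ∀ x i, T x i = if |x i| < 1 / θ then 0 else x i) :
    ∀ p ∈ K,
      (T p.1, p.2) ∈ K ∧
      f (T p.1, p.2) + lam * Φ (T p.1) ≤ f p + lam * Φ p.1 ∧
      (f p + lam * Φ p.1 = f (T p.1, p.2) + lam * Φ (T p.1) ↔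
        ∀ i, p.1 i ≠ 0 → 1 / θ ≤ |p.1 i|) := by
  rintro ⟨x, y⟩ hp
  have hθ0 : 0 < θ := lt_trans (div_pos hκpos hlam) hθ
  have hk : κ < lam * θ := by
    rw [div_lt_iff₀ hlam] at hθ; linarith
  have hTabs : ∀ i, |T x i| ≤ |x i| := by
    intro i
    rw [hT]
    split_ifs
    · simp
    · exact le_rfl
  have hmem : ∀ z : Fin n → ℝ, (∀ i, |z i| ≤ |x i|) → (z, y) ∈ K := by
    intro z hz
    rw [hK] at hp ⊢
    exact ⟨fun i => (ENNReal.ofReal_le_ofReal (hz i)).trans (hp.1 i), hp.2⟩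
  have key : ∀ S : Finset (Fin n),
      |f (x, y) - f (fun i => if i ∈ S then T x i else x i, y)|
        ≤ κ * ∑ i ∈ S, |x i - T x i| := by
    intro S
    have hin : ∀ S : Finset (Fin n), ((fun i => if i ∈ S then T x i else x i, y) :
        (Fin n → ℝ) × (Fin m → ℝ)) ∈ K := by
      intro S
      apply hmem
      intro i
      split_ifs
      · exact hTabs i
      · exact le_rfl
    induction S using Finset.induction_on with
    | empty => simp
    | insert a S ha ih =>
      have hd : ∀ i, i ≠ a → (if i ∈ S then T x i else x i) =
          (if i ∈ insert a S then T x i else x i) := by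
        intro i hi
        simp [Finset.mem_insert, hi]
      have h1 := hlip _ _ (hin S) (hin (insert a S)) rfl (by
        rw [Finset.card_le_one]
        intro i hi j hj
        simp only [Finset.mem_filter, Finset.mem_univ, true_and] at hi hj
        have e1 : i = a := by
          by_contra hne
          exact hi (hd i hne)
        have e2 : j = a := by
          by_contra hne
          exact hj (hd j hne)
        rw [e1, e2])
      dsimp only at h1
      rw [Finset.sum_eq_single a (by
        intro i _ hi
        rw [hd i hi]; simp) (by simp), Real.sqrt_sq_eq_abs, if_neg ha,
        if_pos (Finset.mem_insert_self a S)] at h1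
      rw [Finset.sum_insert ha, mul_add]
      have h2 := abs_sub_le (f (x, y)) (f (fun i => if i ∈ S then T x i else x i, y))
        (f (fun i => if i ∈ insert a S then T x i else x i, y))
      linarith
  have hkey := key Finset.univ
  simp only [Finset.mem_univ, if_true] at hkey
  have hphi : Φ x - Φ (T x) = θ * ∑ i, |x i - T x i| := by
    rw [hΦ, hΦ, ← Finset.sum_sub_distrib, Finset.mul_sum]
    apply Finset.sum_congr rfl
    intro i _
    rw [hT]
    split_ifs with hc
    · have : θ * |x i| ≤ 1 := by
        rw [lt_div_iff₀ hθ0] at hc; linarith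
      simp [min_eq_right this]
    · simp
  have hD : 0 ≤ ∑ i, |x i - T x i| := Finset.sum_nonneg fun i _ => abs_nonneg _
  have hab := abs_le.1 hkey
  have hlamphi : lam * Φ x - lam * Φ (T x) = lam * θ * ∑ i, |x i - T x i| := by
    rw [← mul_sub, hphi, mul_assoc]
  have hmul := mul_le_mul_of_nonneg_right hk.le hD
  refine ⟨hmem _ hTabs, ?_, ?_, ?_⟩
  · dsimp only
    linarith
  · intro he i hi
    dsimp only at he hi ⊢
    have hD0 : ∑ i, |x i - T x i| = 0 := by
      by_contra hne
      have := mul_lt_mul_of_pos_right hk (lt_of_le_of_ne hD (Ne.symm hne))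
      linarith
    have h3 := (Finset.sum_eq_zero_iff_of_nonneg fun i _ => abs_nonneg _).1 hD0 i
      (Finset.mem_univ i)
    by_contra hc
    rw [hT, if_pos (not_le.1 hc)] at h3
    simp at h3
    exact hi h3
  · intro hall
    dsimp only at hall ⊢
    have : T x = x := by
      funext i
      rw [hT]
      split_ifs with hc
      · by_contra hne
        exact absurd (hall i (Ne.symm hne)) (not_le.2 hc)
      · rfl
    rw [this]
end
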